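/- arXiv:1004.0425 — 3 statements merged into one kernel-verified Lean document; each statement's English description precedes it below -/
import Mathlib

section
/- Consider the two-period time-dependent quantum walk on ℤ whose coin sequence is U_{2s} = H₀ and U_{2s+1} = H₁ (s = 0,1,2,...), where H₀ = [[a₀,b₀],[c₀,d₀]] and H₁ = [[a₁,b₁],[c₁,d₁]] are real orthogonal 2×2 matrices all of whose entries are nonzero and det(H₁H₀) > 0. If the initial amplitudes satisfy the symmetry condition |α|² − |β|² + ((α·conj(β) + conj(α)·β)·b₀)/a₀ = 0, then X_t/t converges weakly as t → ∞ to a random variable Z whose density is exactly f_K(x; a_ξ), where |a_ξ| = min{|a₀|, |a₁|}; in particular the limit law is determined by one of the two matrices alone. -/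
open MeasureTheory Complex Filter

noncomputable section

/-- The Konno density function `f_K(x; a)`; only `|a|` matters. -/
def konnoDensity (a x : ℝ) : ℝ :=
  if |x| < |a| then
    Real.sqrt (1 - |a| ^ 2) / (Real.pi * (1 - x ^ 2) * Real.sqrt (|a| ^ 2 - x ^ 2))
  else 0

/-- Time evolution of a time-dependent discrete-time quantum walk on `ℤ`:
`ψ_{t+1}(x) = P_t ψ_t(x+1) + Q_t ψ_t(x-1)`, where `P_t`/`Q_t` are the top/bottom
row parts of the coin `U t`. -/
def QWEvolves (U : ℕ → Matrix (Fin 2) (Fin 2) ℂ) (ψ : ℕ → ℤ → Fin 2 → ℂ) : Prop :=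
  ∀ t : ℕ, ∀ x : ℤ,
    ψ (t + 1) x 0 = U t 0 0 * ψ t (x + 1) 0 + U t 0 1 * ψ t (x + 1) 1 ∧
    ψ (t + 1) x 1 = U t 1 0 * ψ t (x - 1) 0 + U t 1 1 * ψ t (x - 1) 1

/-- Initial state `ψ₀(0) = ᵀ(α, β)`, `ψ₀(x) = 0` for `x ≠ 0`. -/
def QWInit (α β : ℂ) (ψ : ℕ → ℤ → Fin 2 → ℂ) : Prop :=
  ψ 0 0 0 = α ∧ ψ 0 0 1 = β ∧ ∀ x : ℤ, x ≠ 0 → (ψ 0 x 0 = 0 ∧ ψ 0 x 1 = 0)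

/-- `P(X_t = x) = ‖ψ_t(x)‖²`. -/
def qwProb (ψ : ℕ → ℤ → Fin 2 → ℂ) (t : ℕ) (x : ℤ) : ℝ :=
  Complex.normSq (ψ t x 0) + Complex.normSq (ψ t x 1)

/-- The law of `X_t / t`: `μ_t = Σ_{x ∈ ℤ} P(X_t = x) δ_{x/t}`. -/
def qwMeasure (ψ : ℕ → ℤ → Fin 2 → ℂ) (t : ℕ) : Measure ℝ :=
  Measure.sum fun x : ℤ => ENNReal.ofReal (qwProb ψ t x) • Measure.dirac ((x : ℝ) / (t : ℝ))

/-- Weak convergence of `X_t / t` to the law with density `f`. -/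
def qwWeakLimit (ψ : ℕ → ℤ → Fin 2 → ℂ) (f : ℝ → ℝ) : Prop :=
  ∀ g : BoundedContinuousFunction ℝ ℝ,
    Tendsto (fun t : ℕ => ∫ y, g y ∂ qwMeasure ψ t) atTop (nhds (∫ y, g y * f y))

/-- `R(k) = diag(e^{ik}, e^{-ik})`. -/
def Rmat (k : ℝ) : Matrix (Fin 2) (Fin 2) ℂ :=
  !![Complex.exp (Complex.I * k), 0; 0, Complex.exp (-(Complex.I * k))]

/-!
In Fourier space one period of the walk is multiplication by `R(k) H₁ R(k) H₀`, which lies in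
`SU(2)` because the determinants agree. Its eigenvalues are `e^{±iθ}` with `cos θ = A cos 2k - B`,
`A = a₀ a₁` and `B² = (1 - a₀²)(1 - a₁²)`. The characteristic function of `X_t / t` at `ξ` is the
average over `k` of the overlap of the transforms at `k` and `k - ξ / t`. This overlap tends to
`cos (ξ v) - i c(k) sin (ξ v)`, where `v = dθ/dφ` at `φ = 2k` is the group velocity and `c(k)`
depends on the initial state. The symmetry condition makes `c` even, and `v` is odd, so only
`cos (ξ v)` survives.

The law of `|v|` for uniform `φ` is spherical geometry. Let `m = min |a₀| |a₁|` and
`M = max |a₀| |a₁|`. The dispersion relation is the law of cosines for the triangle whose sides of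
sines `m` and `M` enclose the angle `φ`, and `|v|` is the sine of the altitude on the third side.
The altitude has sine `x` exactly when `φ = b ± a` with `cos a = altitudeCos m x` and
`|cos b| = altitudeCos M x`, so `|v| ≥ x` on an interval of length `2 arccos (altitudeCos m x)`,
whatever `M` is. The derivative of `arcsin (altitudeCos m x) / π` is the Konno density.
-/

/-- The group velocity of waves with dispersion relation `cos θ = A cos φ - B`, where `φ` is the
wave number: the derivative of `θ` with respect to `φ`, and `0` where `cos θ = ±1`. -/
def groupVelocity (A B φ : ℝ) : ℝ :=
  A * Real.sin φ / √(1 - (A * Real.cos φ - B) ^ 2)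

lemma groupVelocity_neg (A B φ : ℝ) : groupVelocity A B (-φ) = -groupVelocity A B φ := by
  simp only [groupVelocity, Real.sin_neg, Real.cos_neg]
  ring

@[fun_prop]
lemma measurable_groupVelocity (A B : ℝ) : Measurable (groupVelocity A B) := by
  unfold groupVelocity; fun_prop

lemma hasDerivAt_arccos_dispersion {A B φ : ℝ} (hφ : (A * Real.cos φ - B) ^ 2 < 1) :
    HasDerivAt (fun x => Real.arccos (A * Real.cos x - B)) (groupVelocity A B φ) φ := by
  have hlt := abs_lt.1 ((sq_lt_one_iff_abs_lt_one _).1 hφ)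
  have h := (Real.hasDerivAt_arccos hlt.1.ne' hlt.2.ne).comp φ
    (((Real.hasDerivAt_cos φ).const_mul A).sub_const B)
  refine h.congr_deriv ?_
  rw [groupVelocity]
  ring

lemma abs_dispersion_le (A B φ : ℝ) : |A * Real.cos φ - B| ≤ |A| * |Real.cos φ| + |B| :=
  (abs_sub _ _).trans_eq (by rw [abs_mul])

lemma sq_dispersion_lt_one {A B φ : ℝ} (hA : A ≠ 0) (hAB : |A| + |B| ≤ 1)
    (hφ : Real.sin φ ≠ 0) : (A * Real.cos φ - B) ^ 2 < 1 := by
  have hc : |Real.cos φ| < 1 := by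
    rw [← sq_lt_one_iff_abs_lt_one]
    nlinarith [Real.sin_sq_add_cos_sq φ, sq_pos_of_ne_zero hφ]
  rw [sq_lt_one_iff_abs_lt_one]
  calc |A * Real.cos φ - B| ≤ |A| * |Real.cos φ| + |B| := abs_dispersion_le A B φ
    _ < |A| * 1 + |B| := by gcongr
    _ ≤ 1 := by linarith

lemma abs_add_abs_le_one_of_sq {m M A B : ℝ} (hm : m ^ 2 ≤ 1) (hM : M ^ 2 ≤ 1)
    (hA : |A| = m * M) (hB : B ^ 2 = (1 - m ^ 2) * (1 - M ^ 2)) : |A| + |B| ≤ 1 := by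
  have hB' : |B| = √(1 - m ^ 2) * √(1 - M ^ 2) := by
    rw [← Real.sqrt_mul (by linarith), ← hB, Real.sqrt_sq_eq_abs]
  nlinarith [sq_nonneg (m - M), sq_nonneg (√(1 - m ^ 2) - √(1 - M ^ 2)),
    Real.sq_sqrt (sub_nonneg.2 hm), Real.sq_sqrt (sub_nonneg.2 hM)]

lemma le_abs_groupVelocity_iff {A B φ x : ℝ} (hφ : (A * Real.cos φ - B) ^ 2 < 1) (hx : 0 ≤ x) :
    x ≤ |groupVelocity A B φ| ↔
      0 ≤ A ^ 2 * (1 - Real.cos φ ^ 2) - x ^ 2 * (1 - (A * Real.cos φ - B) ^ 2) := by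
  have hr : 0 < 1 - (A * Real.cos φ - B) ^ 2 := sub_pos.2 hφ
  rw [← abs_of_nonneg hx, ← sq_le_sq, groupVelocity, div_pow, Real.sq_sqrt hr.le, le_div_iff₀ hr,
    mul_pow, Real.sin_sq, abs_of_nonneg hx, sub_nonneg]

/-- The cosine of the angle between a hypotenuse of sine `m` and an altitude of sine `x` in a right
spherical triangle, namely the quotient of their tangents. -/
def altitudeCos (m x : ℝ) : ℝ :=
  x * √(1 - m ^ 2) / (m * √(1 - x ^ 2))

lemma altitudeCos_neg (m x : ℝ) : altitudeCos m (-x) = -altitudeCos m x := by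
  simp [altitudeCos, neg_div]

lemma altitudeCos_self {m : ℝ} (hm : 0 < m) (hm1 : m < 1) : altitudeCos m m = 1 := by
  have : 0 < √(1 - m ^ 2) := Real.sqrt_pos.2 (by nlinarith)
  exact div_self (by positivity)

lemma altitudeCos_nonneg {m x : ℝ} (hm : 0 ≤ m) (hx : 0 ≤ x) : 0 ≤ altitudeCos m x := by
  unfold altitudeCos; positivity

lemma sq_altitudeCos {m x : ℝ} (hm : m ^ 2 ≤ 1) (hx : x ^ 2 ≤ 1) :
    altitudeCos m x ^ 2 = x ^ 2 * (1 - m ^ 2) / (m ^ 2 * (1 - x ^ 2)) := by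
  rw [altitudeCos, div_pow, mul_pow, mul_pow, Real.sq_sqrt (by linarith),
    Real.sq_sqrt (by linarith)]

lemma one_sub_sq_altitudeCos {m x : ℝ} (hm : m ^ 2 ≤ 1) (hm0 : m ≠ 0) (hx : x ^ 2 < 1) :
    1 - altitudeCos m x ^ 2 = (m ^ 2 - x ^ 2) / (m ^ 2 * (1 - x ^ 2)) := by
  have : 1 - x ^ 2 ≠ 0 := by linarith
  rw [sq_altitudeCos hm hx.le]
  field_simp
  ring

lemma altitudeCos_le_one {m x : ℝ} (hm : 0 < m) (hm1 : m < 1) (hx : 0 ≤ x) (hxm : x ≤ m) :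
    altitudeCos m x ≤ 1 := by
  have hx2 : x ^ 2 ≤ m ^ 2 := by gcongr
  have hm2 : m ^ 2 < 1 := by nlinarith
  rw [← sq_le_one_iff₀ (altitudeCos_nonneg hm.le hx), ← sub_nonneg,
    one_sub_sq_altitudeCos hm2.le hm.ne' (by linarith)]
  exact div_nonneg (by linarith) (mul_nonneg (sq_nonneg m) (by linarith))

lemma altitudeCos_anti_left {m M x : ℝ} (hm : 0 < m) (hmM : m ≤ M) (hx : 0 ≤ x) :
    altitudeCos M x ≤ altitudeCos m x := by
  simp only [altitudeCos, mul_comm _ √(1 - x ^ 2), ← div_div]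
  gcongr

lemma cos_sub_sub_mul_sub_cos_add (a b c : ℝ) :
    (Real.cos (b - a) - c) * (c - Real.cos (b + a)) =
      1 - c ^ 2 - Real.cos a ^ 2 - Real.cos b ^ 2 + 2 * c * (Real.cos a * Real.cos b) := by
  rw [Real.cos_sub, Real.cos_add]
  linear_combination Real.sin b ^ 2 * Real.sin_sq_add_cos_sq a +
    (1 - Real.cos a ^ 2) * Real.sin_sq_add_cos_sq b

lemma cos_sub_cos_mul_nonneg_iff {l u φ : ℝ} (hl : 0 ≤ l) (hlu : l ≤ u) (hu : u ≤ Real.pi)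
    (hφ : φ ∈ Set.Icc 0 Real.pi) :
    0 ≤ (Real.cos l - Real.cos φ) * (Real.cos φ - Real.cos u) ↔ φ ∈ Set.Icc l u := by
  have hl' : l ∈ Set.Icc 0 Real.pi := ⟨hl, hlu.trans hu⟩
  have hu' : u ∈ Set.Icc 0 Real.pi := ⟨hl.trans hlu, hu⟩
  have hcos : Real.cos u ≤ Real.cos l := (Real.strictAntiOn_cos.le_iff_ge hu' hl').2 hlu
  rw [Set.mem_Icc, ← Real.strictAntiOn_cos.le_iff_ge hφ hl',
    ← Real.strictAntiOn_cos.le_iff_ge hu' hφ]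
  constructor
  · intro h
    constructor <;> by_contra! hlt <;> nlinarith
  · rintro ⟨h₁, h₂⟩
    exact mul_nonneg (sub_nonneg.2 h₁) (sub_nonneg.2 h₂)

section GroupVelocityLaw

variable {m M A B x : ℝ}

lemma exists_abs_eq_altitudeCos (hm : 0 < m) (hmM : m ≤ M) (hm1 : m < 1) (hM : M ≤ 1)
    (hA : |A| = m * M) (hB : B ^ 2 = (1 - m ^ 2) * (1 - M ^ 2)) (hx : 0 ≤ x) (hxm : x ≤ m) :
    ∃ q, |q| = altitudeCos M x ∧ A * (1 - x ^ 2) * (altitudeCos m x * q) = -(B * x ^ 2) := by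
  have hM0 : 0 < M := hm.trans_le hmM
  have hm2 : m ^ 2 < 1 := by nlinarith
  have hx2 : x ^ 2 < 1 := by nlinarith
  have hx2' : 1 - x ^ 2 ≠ 0 := by linarith
  have hA2 : A ^ 2 = m ^ 2 * M ^ 2 := by rw [← sq_abs, hA, mul_pow]
  have hq : |altitudeCos M x| = altitudeCos M x := abs_of_nonneg (altitudeCos_nonneg hM0.le hx)
  have hsq : (A * (1 - x ^ 2) * (altitudeCos m x * altitudeCos M x)) ^ 2 = (B * x ^ 2) ^ 2 := by
    rw [mul_pow _ (altitudeCos m x * _), mul_pow (altitudeCos m x), sq_altitudeCos hm2.le hx2.le,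
      sq_altitudeCos (by nlinarith) hx2.le, mul_pow, mul_pow, hA2, hB]
    field_simp
  rcases eq_or_eq_neg_of_sq_eq_sq _ _ hsq with h | h
  · exact ⟨-altitudeCos M x, by rw [abs_neg, hq], by rw [← h]; ring⟩
  · exact ⟨altitudeCos M x, hq, h⟩

/-- The level set `|v| = x` of the group velocity is `φ = b ± a`: an altitude of sine `x` makes the
angles `a` and `b` with the two sides. -/
lemma dispersion_eq_mul_cos_sub_cos (hm : 0 < m) (hmM : m ≤ M) (hm1 : m < 1) (hM : M ≤ 1)
    (hA : |A| = m * M) (hB : B ^ 2 = (1 - m ^ 2) * (1 - M ^ 2)) (hx : x ^ 2 < 1) {a b : ℝ}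
    (ha : Real.cos a = altitudeCos m x) (hb : |Real.cos b| = altitudeCos M x)
    (hab : A * (1 - x ^ 2) * (Real.cos a * Real.cos b) = -(B * x ^ 2)) (c : ℝ) :
    A ^ 2 * (1 - c ^ 2) - x ^ 2 * (1 - (A * c - B) ^ 2) =
      A ^ 2 * (1 - x ^ 2) * ((Real.cos (b - a) - c) * (c - Real.cos (b + a))) := by
  have hM0 : 0 < M := hm.trans_le hmM
  have hx' : 1 - x ^ 2 ≠ 0 := by linarith
  have hA2 : A ^ 2 = m ^ 2 * M ^ 2 := by rw [← sq_abs, hA, mul_pow]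
  have ha2 : A ^ 2 * (1 - x ^ 2) * Real.cos a ^ 2 = M ^ 2 * x ^ 2 * (1 - m ^ 2) := by
    rw [ha, sq_altitudeCos (by nlinarith) hx.le, hA2]; field_simp
  have hb2 : A ^ 2 * (1 - x ^ 2) * Real.cos b ^ 2 = m ^ 2 * x ^ 2 * (1 - M ^ 2) := by
    rw [← sq_abs (Real.cos b), hb, sq_altitudeCos (by nlinarith) hx.le, hA2]; field_simp
  rw [cos_sub_sub_mul_sub_cos_add]
  linear_combination ha2 + hb2 - 2 * A * c * hab + x ^ 2 * hB + x ^ 2 * hA2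

lemma exists_le_abs_groupVelocity_iff_mem_Icc (hm : 0 < m) (hmM : m ≤ M) (hm1 : m < 1) (hM : M ≤ 1)
    (hA : |A| = m * M) (hB : B ^ 2 = (1 - m ^ 2) * (1 - M ^ 2)) (hx : 0 ≤ x) (hxm : x ≤ m) :
    ∃ l u, 0 ≤ l ∧ u ≤ Real.pi ∧ u - l = 2 * Real.arccos (altitudeCos m x) ∧
      ∀ φ ∈ Set.Ioo 0 Real.pi, x ≤ |groupVelocity A B φ| ↔ φ ∈ Set.Icc l u := by
  have hM0 : 0 < M := hm.trans_le hmM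
  have hx2 : x ^ 2 < 1 := by nlinarith
  have hA0 : A ≠ 0 := abs_pos.1 (hA ▸ mul_pos hm hM0)
  have hAB := abs_add_abs_le_one_of_sq (by nlinarith) (by nlinarith) hA hB
  obtain ⟨q, hq, hpq⟩ := exists_abs_eq_altitudeCos hm hmM hm1 hM hA hB hx hxm
  have hp0 := altitudeCos_nonneg hm.le hx
  have hp1 := altitudeCos_le_one hm hm1 hx hxm
  obtain ⟨hpq₁, hpq₂⟩ := abs_le.1 (hq.trans_le (altitudeCos_anti_left hm hmM hx))
  set a := Real.arccos (altitudeCos m x)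
  set b := Real.arccos q
  have ha : Real.cos a = altitudeCos m x := Real.cos_arccos (by linarith) hp1
  have hb : Real.cos b = q := Real.cos_arccos (by linarith) (by linarith)
  have ha0 : 0 ≤ a := Real.arccos_nonneg _
  have hab : a ≤ b := Real.arccos_le_arccos hpq₂
  have hab' : b ≤ Real.pi - a := (Real.arccos_le_arccos hpq₁).trans_eq (Real.arccos_neg _)
  refine ⟨b - a, b + a, by linarith, by linarith, by ring, fun φ hφ => ?_⟩
  have hpos : 0 < A ^ 2 * (1 - x ^ 2) := mul_pos (by positivity) (by linarith)
  rw [le_abs_groupVelocity_iff (sq_dispersion_lt_one hA0 hAB (Real.sin_pos_of_mem_Ioo hφ).ne') hx,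
    dispersion_eq_mul_cos_sub_cos hm hmM hm1 hM hA hB hx2 ha (hb ▸ hq) (by rw [ha, hb, hpq]),
    mul_nonneg_iff_of_pos_left hpos, cos_sub_cos_mul_nonneg_iff (by linarith) (by linarith)
    (by linarith) (Set.Ioo_subset_Icc_self hφ)]

lemma volume_le_abs_groupVelocity (hm : 0 < m) (hmM : m ≤ M) (hm1 : m < 1) (hM : M ≤ 1)
    (hA : |A| = m * M) (hB : B ^ 2 = (1 - m ^ 2) * (1 - M ^ 2)) (hx : 0 ≤ x) (hxm : x ≤ m) :
    volume ({φ | x ≤ |groupVelocity A B φ|} ∩ Set.Ioo 0 Real.pi) =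
      ENNReal.ofReal (2 * Real.arccos (altitudeCos m x)) := by
  obtain ⟨l, u, hl, hu, hlu, hmem⟩ :=
    exists_le_abs_groupVelocity_iff_mem_Icc hm hmM hm1 hM hA hB hx hxm
  rw [← hlu]
  refine le_antisymm ?_ ?_
  · rw [← Real.volume_Icc]
    exact measure_mono fun φ hφ => (hmem φ hφ.2).1 hφ.1
  · rw [← Real.volume_Ioo]
    refine measure_mono fun φ hφ => ?_
    have hφ' : φ ∈ Set.Ioo 0 Real.pi := ⟨by linarith [hφ.1], by linarith [hφ.2]⟩
    exact ⟨(hmem φ hφ').2 (Set.Ioo_subset_Icc_self hφ), hφ'⟩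

end GroupVelocityLaw

lemma konnoDensity_nonneg (a x : ℝ) : 0 ≤ konnoDensity a x := by
  unfold konnoDensity
  split_ifs with h
  · rcases le_or_gt (|a| ^ 2) 1 with ha | ha
    · have : x ^ 2 ≤ |a| ^ 2 := by rw [← sq_abs x]; gcongr
      have : 0 ≤ 1 - x ^ 2 := by linarith
      positivity
    · rw [Real.sqrt_eq_zero_of_nonpos (by linarith), zero_div]
  · rfl

lemma konnoDensity_neg (a x : ℝ) : konnoDensity a (-x) = konnoDensity a x := by
  simp [konnoDensity]

@[fun_prop]
lemma measurable_konnoDensity (a : ℝ) : Measurable (konnoDensity a) := by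
  unfold konnoDensity
  refine Measurable.ite (measurableSet_lt (by fun_prop) (by fun_prop)) ?_ ?_ <;> fun_prop

lemma hasDerivAt_altitudeCos {m x : ℝ} (hm : m ≠ 0) (hx : x ^ 2 < 1) :
    HasDerivAt (altitudeCos m) (√(1 - m ^ 2) / (m * ((1 - x ^ 2) * √(1 - x ^ 2)))) x := by
  have hw : 0 < 1 - x ^ 2 := by linarith
  have hr : √(1 - x ^ 2) ≠ 0 := (Real.sqrt_pos.2 hw).ne'
  have hd := ((hasDerivAt_pow 2 x).const_sub 1).sqrt hw.ne'
  refine (((hasDerivAt_id x).mul_const √(1 - m ^ 2)).div (hd.const_mul m)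
    (mul_ne_zero hm hr)).congr_deriv ?_
  have hw2 : √(1 - x ^ 2) ^ 2 = 1 - x ^ 2 := Real.sq_sqrt hw.le
  have hw3 : 1 - x ^ 2 ≠ 0 := hw.ne'
  field_simp
  simp only [id, hw2]
  push_cast
  ring

lemma hasDerivAt_arcsin_altitudeCos {m x : ℝ} (hm : 0 < m) (hm1 : m < 1) (hx : |x| < m) :
    HasDerivAt (fun y => 1 / Real.pi * Real.arcsin (altitudeCos m y)) (konnoDensity m x) x := by
  have hx2 : x ^ 2 < m ^ 2 := sq_lt_sq.2 (by rwa [abs_of_pos hm])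
  have hm2 : m ^ 2 < 1 := by nlinarith
  have hw : 0 < 1 - x ^ 2 := by linarith
  have hd : 0 < m ^ 2 - x ^ 2 := by linarith
  have hcos := one_sub_sq_altitudeCos hm2.le hm.ne' (by linarith)
  have hlt : altitudeCos m x ^ 2 < 1 := by
    rw [← sub_pos, hcos]; positivity
  obtain ⟨hne, hne'⟩ := abs_lt.1 ((sq_lt_one_iff_abs_lt_one _).1 hlt)
  refine (((Real.hasDerivAt_arcsin hne.ne' hne'.ne).comp x
    (hasDerivAt_altitudeCos hm.ne' (by linarith))).const_mul (1 / Real.pi)).congr_deriv ?_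
  rw [hcos, Real.sqrt_div hd.le, Real.sqrt_mul (by positivity), Real.sqrt_sq hm.le,
    konnoDensity, abs_of_pos hm, if_pos hx]
  have := Real.sqrt_pos.2 hd
  have := Real.sqrt_pos.2 hw
  field_simp

/-- The measure on `ℝ` with the Konno density, a probability measure for `0 < m < 1`. -/
def konnoLaw (m : ℝ) : Measure ℝ :=
  volume.withDensity fun y => ENNReal.ofReal (konnoDensity m y)

section KonnoLaw

variable {m x : ℝ}

lemma konnoLaw_abs_lt (hm : 0 < m) (hm1 : m < 1) (hx : 0 ≤ x) (hxm : x ≤ m) :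
    konnoLaw m {y | |y| < x} =
      ENNReal.ofReal (2 / Real.pi * Real.arcsin (altitudeCos m x)) := by
  have hcont : ContinuousOn (fun y => 1 / Real.pi * Real.arcsin (altitudeCos m y))
      (Set.Icc (-x) x) := by
    refine continuousOn_const.mul (Real.continuous_arcsin.comp_continuousOn fun y hy => ?_)
    have : y ^ 2 < 1 := by nlinarith [sq_le_sq.2 ((abs_le.2 hy).trans (le_abs_self x))]
    exact (hasDerivAt_altitudeCos hm.ne' this).continuousAt.continuousWithinAt
  have hderiv : ∀ y ∈ Set.Ioo (-x) x,
      HasDerivAt (fun y => 1 / Real.pi * Real.arcsin (altitudeCos m y)) (konnoDensity m y) y :=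
    fun y hy => hasDerivAt_arcsin_altitudeCos hm hm1 ((abs_lt.2 hy).trans_le hxm)
  have hint := intervalIntegral.integrableOn_deriv_of_nonneg hcont hderiv
    fun y _ => konnoDensity_nonneg m y
  have hle : -x ≤ x := by linarith
  have hval := intervalIntegral.integral_eq_sub_of_hasDerivAt_of_le hle hcont hderiv
    ((intervalIntegrable_iff_integrableOn_Ioc_of_le hle).2 hint)
  have hset : {y : ℝ | |y| < x} = Set.Ioo (-x) x := by
    ext y; simp [abs_lt]
  rw [konnoLaw, hset, withDensity_apply _ measurableSet_Ioo, setLIntegral_congr Ioo_ae_eq_Ioc,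
    ← ofReal_integral_eq_lintegral_ofReal hint (ae_of_all _ (konnoDensity_nonneg m)),
    ← intervalIntegral.integral_of_le hle, hval, altitudeCos_neg, Real.arcsin_neg]
  congr 1
  ring

lemma isProbabilityMeasure_konnoLaw (hm : 0 < m) (hm1 : m < 1) :
    IsProbabilityMeasure (konnoLaw m) := by
  have hmeas : MeasurableSet {y : ℝ | |y| < m} := measurableSet_lt measurable_abs measurable_const
  have hcompl : konnoLaw m {y | |y| < m}ᶜ = 0 := by
    rw [konnoLaw, withDensity_apply _ hmeas.compl]
    refine setLIntegral_eq_zero hmeas.compl fun y hy => ?_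
    have : ¬ |y| < m := hy
    simp [konnoDensity, abs_of_pos hm, this]
  constructor
  rw [← measure_add_measure_compl hmeas, hcompl, add_zero, konnoLaw_abs_lt hm hm1 hm.le le_rfl,
    altitudeCos_self hm hm1, Real.arcsin_one, div_mul_div_cancel₀' two_ne_zero,
    div_self Real.pi_ne_zero, ENNReal.ofReal_one]

lemma konnoLaw_le_abs (hm : 0 < m) (hm1 : m < 1) (hx : 0 ≤ x) (hxm : x ≤ m) :
    konnoLaw m {y | x ≤ |y|} = ENNReal.ofReal (2 / Real.pi * Real.arccos (altitudeCos m x)) := by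
  have := isProbabilityMeasure_konnoLaw hm hm1
  have hmeas : MeasurableSet {y : ℝ | |y| < x} := measurableSet_lt measurable_abs measurable_const
  have hset : {y : ℝ | x ≤ |y|} = {y | |y| < x}ᶜ := by
    ext y; simp
  have harcsin : 0 ≤ 2 / Real.pi * Real.arcsin (altitudeCos m x) :=
    mul_nonneg (by positivity) (Real.arcsin_nonneg.2 (altitudeCos_nonneg hm.le hx))
  rw [hset, prob_compl_eq_one_sub hmeas, konnoLaw_abs_lt hm hm1 hx hxm, ← ENNReal.ofReal_one,
    ← ENNReal.ofReal_sub _ harcsin, Real.arccos, mul_sub, div_mul_div_cancel₀' two_ne_zero,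
    div_self Real.pi_ne_zero]

lemma isNegInvariant_konnoLaw (m : ℝ) : (konnoLaw m).IsNegInvariant := by
  refine ⟨Measure.ext fun s hs => ?_⟩
  rw [Measure.neg, Measure.map_apply measurable_neg hs, konnoLaw,
    withDensity_apply _ (measurable_neg hs), withDensity_apply _ hs,
    ← (Measure.measurePreserving_neg volume).setLIntegral_comp_preimage hs (by fun_prop)]
  simp only [konnoDensity_neg]

lemma map_abs_konnoLaw {M A B : ℝ} (hm : 0 < m) (hmM : m ≤ M) (hm1 : m < 1) (hM : M ≤ 1)
    (hA : |A| = m * M) (hB : B ^ 2 = (1 - m ^ 2) * (1 - M ^ 2)) :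
    (konnoLaw m).map (fun y => |y|) =
      (ENNReal.ofReal (1 / Real.pi) • volume.restrict (Set.Ioo 0 Real.pi)).map
        fun φ => |groupVelocity A B φ| := by
  have := isProbabilityMeasure_konnoLaw hm hm1
  have hmeas : Measurable fun φ => |groupVelocity A B φ| := by fun_prop
  have hIcc {x : ℝ} (hx : 0 ≤ x) (hxm : x ≤ m) : konnoLaw m {y | x ≤ |y|} =
      ENNReal.ofReal (1 / Real.pi) *
        volume ({φ | x ≤ |groupVelocity A B φ|} ∩ Set.Ioo 0 Real.pi) := by
    rw [konnoLaw_le_abs hm hm1 hx hxm, volume_le_abs_groupVelocity hm hmM hm1 hM hA hB hx hxm,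
      ← ENNReal.ofReal_mul (by positivity)]
    ring_nf
  refine Measure.ext_of_Ici _ _ fun x => ?_
  rw [Measure.map_apply measurable_abs measurableSet_Ici, Measure.map_apply hmeas measurableSet_Ici,
    Measure.smul_apply, Measure.restrict_apply (hmeas measurableSet_Ici), smul_eq_mul]
  simp only [Set.preimage, Set.mem_Ici]
  rcases le_or_gt x 0 with hx0 | hx0
  · have h0 := hIcc le_rfl hm.le
    simp only [abs_nonneg] at h0
    simpa only [hx0.trans (abs_nonneg _)] using h0
  rcases le_or_gt x m with hxm | hxm
  · exact hIcc hx0.le hxm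
  · have h0 : konnoLaw m {y | m ≤ |y|} = 0 := by
      rw [konnoLaw_le_abs hm hm1 hm.le le_rfl, altitudeCos_self hm hm1, Real.arccos_one, mul_zero,
        ENNReal.ofReal_zero]
    refine (measure_mono_null (fun y (hy : x ≤ |y|) => hxm.le.trans hy) h0).trans ?_
    refine (le_antisymm (le_trans ?_ ((hIcc hm.le le_rfl).symm.trans h0).le) bot_le).symm
    gcongr

end KonnoLaw

lemma charFun_eq_integral_cos_map_abs {μ : Measure ℝ} [IsFiniteMeasure μ] [μ.IsNegInvariant]
    (ξ : ℝ) : charFun μ ξ = ((∫ r, Real.cos (ξ * r) ∂μ.map fun y => |y| : ℝ) : ℂ) := by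
  have hint (η : ℝ) : Integrable (fun y : ℝ => Complex.exp (η * y * I)) μ := by
    refine Integrable.of_bound (by fun_prop) 1 (ae_of_all _ fun y => ?_)
    rw [← Complex.ofReal_mul, Complex.norm_exp_ofReal_mul_I]
  have hneg : charFun μ (-ξ) = charFun μ ξ := by
    rw [charFun_apply_real, charFun_apply_real, ← integral_neg_eq_self]
    simp
  rw [integral_map measurable_abs.aemeasurable (by fun_prop), ← integral_complex_ofReal]
  have hcos (y : ℝ) : ((Real.cos (ξ * |y|) : ℝ) : ℂ) =
      (Complex.exp (ξ * y * I) + Complex.exp ((-ξ : ℝ) * y * I)) / 2 := by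
    rw [← Real.cos_abs, abs_mul, abs_abs, ← abs_mul, Real.cos_abs, Complex.ofReal_cos, Complex.cos]
    push_cast
    ring_nf
  simp only [hcos]
  rw [integral_div, integral_add (hint ξ) (hint (-ξ)), ← charFun_apply_real, ← charFun_apply_real,
    hneg, ← two_mul, mul_div_cancel_left₀ _ two_ne_zero]

lemma charFun_konnoLaw {m M A B : ℝ} (hm : 0 < m) (hmM : m ≤ M) (hm1 : m < 1) (hM : M ≤ 1)
    (hA : |A| = m * M) (hB : B ^ 2 = (1 - m ^ 2) * (1 - M ^ 2)) (ξ : ℝ) :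
    charFun (konnoLaw m) ξ =
      ((1 / Real.pi * ∫ φ in 0..Real.pi, Real.cos (ξ * groupVelocity A B φ) : ℝ) : ℂ) := by
  have := isProbabilityMeasure_konnoLaw hm hm1
  have := isNegInvariant_konnoLaw m
  have habs (y : ℝ) : Real.cos (ξ * |y|) = Real.cos (ξ * y) := by
    rw [← Real.cos_abs, abs_mul, abs_abs, ← abs_mul, Real.cos_abs]
  rw [charFun_eq_integral_cos_map_abs, map_abs_konnoLaw hm hmM hm1 hM hA hB,
    integral_map (by fun_prop) (by fun_prop), integral_smul_measure,
    intervalIntegral.integral_of_le Real.pi_pos.le, integral_Ioc_eq_integral_Ioo,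
    ENNReal.toReal_ofReal (by positivity)]
  simp only [habs, smul_eq_mul]

open scoped Matrix Matrix.Norms.L2Operator

lemma Rmat_zero : Rmat 0 = 1 := by
  simp [Rmat, Matrix.one_fin_two]

lemma Rmat_mul_Rmat (k l : ℝ) : Rmat k * Rmat l = Rmat (k + l) := by
  simp only [Rmat, Matrix.mul_fin_two, mul_zero, zero_mul, add_zero, zero_add, ← Complex.exp_add]
  push_cast
  ring_nf

lemma conjTranspose_Rmat (k : ℝ) : (Rmat k)ᴴ = Rmat (-k) := by
  ext i j
  fin_cases i <;> fin_cases j <;> simp [Rmat, ← Complex.exp_conj]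

lemma Rmat_mem_unitaryGroup (k : ℝ) : Rmat k ∈ Matrix.unitaryGroup (Fin 2) ℂ := by
  rw [Matrix.mem_unitaryGroup_iff', Matrix.star_eq_conjTranspose, conjTranspose_Rmat,
    Rmat_mul_Rmat, neg_add_cancel, Rmat_zero]

lemma Rmat_mulVec (k : ℝ) (v : Fin 2 → ℂ) :
    Rmat k *ᵥ v = ![Complex.exp (k * I) * v 0, Complex.exp (-(k * I)) * v 1] := by
  funext j
  fin_cases j <;> simp [Rmat, dotProduct, mul_comm I]

@[fun_prop]
lemma continuous_Rmat : Continuous Rmat := by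
  refine continuous_matrix fun i j => ?_
  fin_cases i <;> fin_cases j <;> simp only [Rmat, Fin.zero_eta, Fin.mk_one, Matrix.of_apply,
    Matrix.cons_val', Matrix.cons_val_zero, Matrix.cons_val_one, Matrix.cons_val_fin_one] <;>
    fun_prop

lemma norm_star_dotProduct_mulVec_le {n : Type*} [Fintype n] [DecidableEq n] (M : Matrix n n ℂ)
    {v w : n → ℂ} (hv : star v ⬝ᵥ v = 1) (hw : star w ⬝ᵥ w = 1) :
    ‖star v ⬝ᵥ (M *ᵥ w)‖ ≤ ‖M‖ := by
  have hnorm {v : n → ℂ} (hv : star v ⬝ᵥ v = 1) : ‖WithLp.toLp 2 v‖ = 1 := by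
    have h := inner_self_eq_norm_sq (𝕜 := ℂ) (WithLp.toLp 2 v)
    rw [EuclideanSpace.inner_toLp_toLp, dotProduct_comm, hv, RCLike.one_re] at h
    exact (pow_eq_one_iff_of_nonneg (norm_nonneg _) two_ne_zero).1 h.symm
  rw [dotProduct_comm, ← EuclideanSpace.inner_toLp_toLp (𝕜 := ℂ)]
  refine (norm_inner_le_norm _ _).trans ?_
  rw [hnorm hv, one_mul]
  exact (Matrix.l2_opNorm_mulVec M (WithLp.toLp 2 w)).trans_eq (by rw [hnorm hw, mul_one])

lemma integral_exp_int_mul (n : ℤ) :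
    ∫ k in -Real.pi..Real.pi, Complex.exp (n * k * I) = if n = 0 then 2 * (Real.pi : ℂ) else 0 := by
  split_ifs with hn
  · simp only [hn, Int.cast_zero, zero_mul, Complex.exp_zero, intervalIntegral.integral_const,
      Complex.real_smul]
    push_cast
    ring
  · have hfun : (fun k : ℝ => Complex.exp (n * k * I)) =
        fun k : ℝ => Complex.exp (n * I * k) := by
      funext k; ring_nf
    rw [hfun, integral_exp_mul_complex (by simp [hn]), div_eq_zero_iff, sub_eq_zero,
      Complex.exp_eq_exp_iff_exists_int]
    refine Or.inl ⟨n, ?_⟩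
    push_cast
    ring

/-- The Fourier transform of a state of the walk. The sum is junk unless it converges; it is used
for states of finite support. -/
def qwFourier (φ : ℤ → Fin 2 → ℂ) (k : ℝ) : Fin 2 → ℂ :=
  fun j => ∑' x : ℤ, Complex.exp (-(x * k * I)) * φ x j

/-- The inner product of the Fourier transform of a state at the wave numbers `k` and `l`. Averaging
it over `k` with `l = k - ξ / t` gives the characteristic function of `X_t / t` at `ξ`. -/
def qwOverlap (φ : ℤ → Fin 2 → ℂ) (k l : ℝ) : ℂ :=
  star (qwFourier φ k) ⬝ᵥ qwFourier φ l

section Fourier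

variable {φ : ℤ → Fin 2 → ℂ}

lemma qwFourier_eq_sum {S : Finset ℤ} (hS : Function.support φ ⊆ S) (k : ℝ) :
    qwFourier φ k = ∑ x ∈ S, Complex.exp (-(x * k * I)) • φ x := by
  funext j
  rw [qwFourier, Finset.sum_apply]
  refine tsum_eq_sum fun x hx => ?_
  rw [Function.notMem_support.1 fun h => hx (hS h), Pi.zero_apply, mul_zero]

lemma continuous_qwFourier (hφ : (Function.support φ).Finite) : Continuous (qwFourier φ) := by
  rw [funext (qwFourier_eq_sum (hφ.coe_toFinset).ge)]
  fun_prop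

lemma continuous_qwOverlap_sub (hφ : (Function.support φ).Finite) (h : ℝ) :
    Continuous fun k => qwOverlap φ k (k - h) := by
  have := continuous_qwFourier hφ
  unfold qwOverlap
  fun_prop

/-- Parseval's identity: shifting the wave number modulates the state. -/
lemma integral_qwOverlap_sub {S : Finset ℤ} (hS : Function.support φ ⊆ S) (h : ℝ) :
    ∫ k in -Real.pi..Real.pi, qwOverlap φ k (k - h) =
      2 * Real.pi * ∑ x ∈ S, (star (φ x) ⬝ᵥ φ x) * Complex.exp (x * h * I) := by
  have hexp (x y : ℤ) (k : ℝ) :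
      star (Complex.exp (-(x * k * I))) * Complex.exp (-(y * (k - h : ℝ) * I)) =
        Complex.exp (y * h * I) * Complex.exp ((x - y : ℤ) * k * I) := by
    rw [← starRingEnd_apply, ← Complex.exp_conj, ← Complex.exp_add, ← Complex.exp_add]
    simp only [map_neg, map_mul, map_intCast, Complex.conj_ofReal, Complex.conj_I]
    congr 1
    push_cast
    ring
  have hpt (k : ℝ) : qwOverlap φ k (k - h) =
      ∑ x ∈ S, ∑ y ∈ S, (star (φ x) ⬝ᵥ φ y) * Complex.exp (y * h * I) *
        Complex.exp ((x - y : ℤ) * k * I) := by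
    rw [qwOverlap, qwFourier_eq_sum hS, qwFourier_eq_sum hS, star_sum, sum_dotProduct]
    refine Finset.sum_congr rfl fun x _ => ?_
    rw [dotProduct_sum]
    refine Finset.sum_congr rfl fun y _ => ?_
    rw [star_smul, smul_dotProduct, dotProduct_smul, smul_smul, hexp, smul_eq_mul]
    ring
  simp_rw [hpt]
  rw [intervalIntegral.integral_finsetSum fun x _ =>
    (by fun_prop : Continuous _).intervalIntegrable _ _, Finset.mul_sum]
  refine Finset.sum_congr rfl fun x hx => ?_
  rw [intervalIntegral.integral_finsetSum fun y _ =>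
    (by fun_prop : Continuous _).intervalIntegrable _ _]
  simp_rw [intervalIntegral.integral_const_mul, integral_exp_int_mul, sub_eq_zero]
  simp only [mul_ite, mul_zero, Finset.sum_ite_eq, hx, if_true]
  ring

lemma tsum_exp_mul_add (f : ℤ → ℂ) (a : ℤ) (k : ℝ) :
    ∑' x : ℤ, Complex.exp (-(x * k * I)) * f (x + a) =
      Complex.exp (a * k * I) * ∑' x : ℤ, Complex.exp (-(x * k * I)) * f x := by
  rw [← (Equiv.addRight a).tsum_eq fun x : ℤ => Complex.exp (-(x * k * I)) * f x, ← tsum_mul_left]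
  refine tsum_congr fun x => ?_
  rw [Equiv.coe_addRight, ← mul_assoc, ← Complex.exp_add]
  push_cast
  ring_nf

lemma qwFourier_mulVec (hφ : (Function.support φ).Finite) (M : Matrix (Fin 2) (Fin 2) ℂ) (k : ℝ) :
    qwFourier (fun x => M *ᵥ φ x) k = M *ᵥ qwFourier φ k := by
  have hS : Function.support (fun x => M *ᵥ φ x) ⊆ hφ.toFinset := fun x hx => by
    simpa using fun h => hx (by simp [h])
  rw [qwFourier_eq_sum hS, qwFourier_eq_sum hφ.coe_toFinset.ge, Matrix.mulVec_sum]
  simp only [Matrix.mulVec_smul]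

end Fourier

section Evolution

variable {U : ℕ → Matrix (Fin 2) (Fin 2) ℂ} {ψ : ℕ → ℤ → Fin 2 → ℂ} {α β : ℂ}

lemma QWInit.support_subset (h : QWInit α β ψ) : Function.support (ψ 0) ⊆ {0} := by
  refine Function.support_subset_iff'.2 fun x hx => ?_
  obtain ⟨h₀, h₁⟩ := h.2.2 x hx
  funext j
  fin_cases j <;> assumption

lemma QWInit.finite_support (h : QWInit α β ψ) : (Function.support (ψ 0)).Finite :=
  (Set.finite_singleton 0).subset h.support_subset

lemma QWInit.qwFourier_eq (h : QWInit α β ψ) (k : ℝ) : qwFourier (ψ 0) k = ![α, β] := by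
  rw [qwFourier_eq_sum (S := {0}) (by simpa using h.support_subset)]
  funext j
  fin_cases j <;> simp [h.1, h.2.1]

lemma QWEvolves.finite_support (hψ : QWEvolves U ψ) (h₀ : (Function.support (ψ 0)).Finite) (t : ℕ) :
    (Function.support (ψ t)).Finite := by
  induction t with
  | zero => exact h₀
  | succ t ih =>
    refine ((ih.preimage (add_left_injective (1 : ℤ)).injOn).union
      (ih.preimage (sub_left_injective (b := (1 : ℤ))).injOn)).subset ?_
    refine Function.support_subset_iff'.2 fun x hx => ?_
    obtain ⟨hp, hn⟩ : ψ t (x + 1) = 0 ∧ ψ t (x - 1) = 0 := by simpa using hx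
    funext j
    fin_cases j
    · simp [(hψ t x).1, hp]
    · simp [(hψ t x).2, hn]

lemma QWEvolves.qwFourier_succ (hψ : QWEvolves U ψ) {t : ℕ}
    (ht : (Function.support (ψ t)).Finite) (k : ℝ) :
    qwFourier (ψ (t + 1)) k = Rmat k *ᵥ (U t *ᵥ qwFourier (ψ t) k) := by
  have h₀ (x : ℤ) : ψ (t + 1) x 0 = (U t *ᵥ ψ t (x + 1)) 0 := by
    rw [(hψ t x).1, Matrix.mulVec, dotProduct, Fin.sum_univ_two]
  have h₁ (x : ℤ) : ψ (t + 1) x 1 = (U t *ᵥ ψ t (x + -1)) 1 := by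
    rw [(hψ t x).2, Matrix.mulVec, dotProduct, Fin.sum_univ_two, sub_eq_add_neg]
  have h (j : Fin 2) (c : ℤ) := tsum_exp_mul_add (fun x => (U t *ᵥ ψ t x) j) c k
  rw [← qwFourier_mulVec ht]
  funext j
  fin_cases j
  · simp only [Fin.zero_eta, Rmat_mulVec, Matrix.cons_val_zero, qwFourier, h₀, h, Int.cast_one,
      one_mul]
  · simp only [Fin.mk_one, Rmat_mulVec, Matrix.cons_val_one, Matrix.cons_val_fin_one, qwFourier,
      h₁, h, Int.cast_neg, Int.cast_one, neg_mul, one_mul]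

lemma qwProb_nonneg (ψ : ℕ → ℤ → Fin 2 → ℂ) (t : ℕ) (x : ℤ) : 0 ≤ qwProb ψ t x :=
  add_nonneg (Complex.normSq_nonneg _) (Complex.normSq_nonneg _)

lemma star_dotProduct_self_eq_normSq_add (v : Fin 2 → ℂ) :
    star v ⬝ᵥ v = (Complex.normSq (v 0) + Complex.normSq (v 1) : ℝ) := by
  simp [dotProduct, Fin.sum_univ_two, Complex.normSq_eq_conj_mul_self]

lemma charFun_qwMeasure {t : ℕ} (ht : (Function.support (ψ t)).Finite) (ξ : ℝ) :
    charFun (qwMeasure ψ t) ξ =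
      (2 * Real.pi : ℂ)⁻¹ * ∫ k in -Real.pi..Real.pi, qwOverlap (ψ t) k (k - ξ / t) := by
  have hS := ht.coe_toFinset.ge
  have hpi : (2 * Real.pi : ℂ) ≠ 0 := by simp [Real.pi_ne_zero]
  rw [integral_qwOverlap_sub hS, inv_mul_cancel_left₀ hpi, charFun_apply_real, qwMeasure,
    integral_sum_dirac fun _ => ENNReal.ofReal_ne_top,
    tsum_eq_sum (s := ht.toFinset) fun x hx => by
      simp [qwProb, Function.notMem_support.1 fun h => hx (hS h)]]
  refine Finset.sum_congr rfl fun x _ => ?_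
  rw [ENNReal.toReal_ofReal (qwProb_nonneg ψ t x), Complex.real_smul,
    star_dotProduct_self_eq_normSq_add, qwProb]
  congr 2
  push_cast
  ring

lemma isProbabilityMeasure_qwMeasure {t : ℕ} (ht : (Function.support (ψ t)).Finite)
    (hnorm : ∀ k, qwOverlap (ψ t) k k = 1) : IsProbabilityMeasure (qwMeasure ψ t) := by
  have h := charFun_qwMeasure ht 0
  simp only [charFun_zero, zero_div, sub_zero, hnorm, intervalIntegral.integral_const,
    sub_neg_eq_add, Complex.real_smul, mul_one, ← two_mul] at h
  have h' : (qwMeasure ψ t).real Set.univ = (2 * Real.pi)⁻¹ * (2 * Real.pi) := by exact_mod_cast h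
  rw [inv_mul_cancel₀ (mul_ne_zero two_ne_zero Real.pi_ne_zero)] at h'
  exact ⟨(ENNReal.toReal_eq_one_iff _).1 h'⟩

lemma qwWeakLimit_of_tendsto_charFun {f : ℝ → ℝ} (hf : Measurable f) (hf₀ : ∀ x, 0 ≤ f x)
    (hprob : IsProbabilityMeasure (volume.withDensity fun x => ENNReal.ofReal (f x)))
    (hψ : ∀ t, IsProbabilityMeasure (qwMeasure ψ t))
    (hlim : ∀ ξ, Tendsto (fun t => charFun (qwMeasure ψ t) ξ) atTop
      (nhds (charFun (volume.withDensity fun x => ENNReal.ofReal (f x)) ξ))) :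
    qwWeakLimit ψ f := by
  let μ (t : ℕ) : ProbabilityMeasure ℝ := ⟨qwMeasure ψ t, hψ t⟩
  let ν : ProbabilityMeasure ℝ := ⟨_, hprob⟩
  have hμ : Tendsto μ atTop (nhds ν) := ProbabilityMeasure.tendsto_of_tendsto_charFun hlim
  intro g
  have hg : ∫ y, g y ∂(ν : Measure ℝ) = ∫ y, g y * f y := by
    rw [ProbabilityMeasure.coe_mk, integral_withDensity_eq_integral_toReal_smul (by fun_prop)
      (ae_of_all _ fun _ => ENNReal.ofReal_lt_top)]
    simp only [ENNReal.toReal_ofReal (hf₀ _), smul_eq_mul, mul_comm]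
  exact hg ▸ ProbabilityMeasure.tendsto_iff_forall_integral_tendsto.1 hμ g

end Evolution

section UnitaryEvolution

variable {n : Type*} [Fintype n]

lemma star_mulVec_dotProduct_mulVec (M N : Matrix n n ℂ) (v w : n → ℂ) :
    star (M *ᵥ v) ⬝ᵥ (N *ᵥ w) = star v ⬝ᵥ ((Mᴴ * N) *ᵥ w) := by
  rw [Matrix.star_mulVec, ← Matrix.dotProduct_mulVec, Matrix.mulVec_mulVec]

lemma star_mulVec_dotProduct_mulVec_of_mem_unitaryGroup [DecidableEq n] {M : Matrix n n ℂ}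
    (hM : M ∈ Matrix.unitaryGroup n ℂ) (v w : n → ℂ) :
    star (M *ᵥ v) ⬝ᵥ (M *ᵥ w) = star v ⬝ᵥ w := by
  rw [star_mulVec_dotProduct_mulVec, ← Matrix.star_eq_conjTranspose,
    Matrix.mem_unitaryGroup_iff'.1 hM, Matrix.one_mulVec]

variable {U : ℕ → Matrix (Fin 2) (Fin 2) ℂ} {ψ : ℕ → ℤ → Fin 2 → ℂ} {α β : ℂ}

lemma QWInit.qwOverlap_self (hinit : QWInit α β ψ)
    (hαβ : Complex.normSq α + Complex.normSq β = 1) (k : ℝ) : qwOverlap (ψ 0) k k = 1 := by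
  rw [qwOverlap, hinit.qwFourier_eq, star_dotProduct_self_eq_normSq_add]
  exact_mod_cast hαβ

lemma QWEvolves.qwOverlap_self (hψ : QWEvolves U ψ) (hU : ∀ t, U t ∈ Matrix.unitaryGroup (Fin 2) ℂ)
    (h₀ : (Function.support (ψ 0)).Finite) (hnorm : ∀ k, qwOverlap (ψ 0) k k = 1) (t : ℕ) (k : ℝ) :
    qwOverlap (ψ t) k k = 1 := by
  induction t with
  | zero => exact hnorm k
  | succ t ih =>
    rw [qwOverlap, hψ.qwFourier_succ (hψ.finite_support h₀ t),
      star_mulVec_dotProduct_mulVec_of_mem_unitaryGroup (Rmat_mem_unitaryGroup k),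
      star_mulVec_dotProduct_mulVec_of_mem_unitaryGroup (hU t), ← qwOverlap, ih]

lemma norm_qwOverlap_le_one {φ : ℤ → Fin 2 → ℂ} (hφ : ∀ k, qwOverlap φ k k = 1) (k l : ℝ) :
    ‖qwOverlap φ k l‖ ≤ 1 := by
  have h := norm_star_dotProduct_mulVec_le 1 (hφ k) (hφ l)
  rwa [Matrix.one_mulVec, norm_one] at h

lemma QWEvolves.norm_qwOverlap_succ_sub_le (hψ : QWEvolves U ψ) {t : ℕ}
    (hU : U t ∈ Matrix.unitaryGroup (Fin 2) ℂ) (ht : (Function.support (ψ t)).Finite)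
    (hnorm : ∀ k, qwOverlap (ψ t) k k = 1) (k l : ℝ) :
    ‖qwOverlap (ψ (t + 1)) k l - qwOverlap (ψ t) k l‖ ≤ ‖Rmat (l - k) - 1‖ := by
  have hunit (k : ℝ) : star (U t *ᵥ qwFourier (ψ t) k) ⬝ᵥ (U t *ᵥ qwFourier (ψ t) k) = 1 :=
    (star_mulVec_dotProduct_mulVec_of_mem_unitaryGroup hU _ _).trans (hnorm k)
  have hdiff : qwOverlap (ψ (t + 1)) k l - qwOverlap (ψ t) k l =
      star (U t *ᵥ qwFourier (ψ t) k) ⬝ᵥ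
        ((Rmat (l - k) - 1) *ᵥ (U t *ᵥ qwFourier (ψ t) l)) := by
    rw [Matrix.sub_mulVec, Matrix.one_mulVec, dotProduct_sub,
      star_mulVec_dotProduct_mulVec_of_mem_unitaryGroup hU, qwOverlap, hψ.qwFourier_succ ht,
      hψ.qwFourier_succ ht, star_mulVec_dotProduct_mulVec, conjTranspose_Rmat, Rmat_mul_Rmat,
      neg_add_eq_sub, ← qwOverlap]
  rw [hdiff]
  exact norm_star_dotProduct_mulVec_le _ (hunit k) (hunit l)

end UnitaryEvolution

section Rotation

lemma smul_one_add_smul_mul {R A : Type*} [CommRing R] [Ring A] [Algebra R A] {J : A}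
    (hJ : J * J = -1) (a b c d : R) :
    (a • 1 + b • J) * (c • 1 + d • J) = (a * c - b * d) • 1 + (a * d + b * c) • J := by
  simp only [add_mul, mul_add, smul_mul_smul_comm, hJ, mul_one, one_mul]
  module

lemma cos_smul_one_add_sin_smul_pow {A : Type*} [Ring A] [Algebra ℂ A] {J : A}
    (hJ : J * J = -1) (z : ℂ) (n : ℕ) :
    (Complex.cos z • (1 : A) + Complex.sin z • J) ^ n =
      Complex.cos (n * z) • (1 : A) + Complex.sin (n * z) • J := by
  induction n with
  | zero => simp
  | succ n ih =>
    rw [pow_succ, ih, smul_one_add_smul_mul hJ, ← Complex.cos_add, add_comm (_ * Complex.sin z),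
      ← Complex.sin_add, Nat.cast_succ, add_one_mul]

lemma tendsto_cos_smul_sub_mul_cos_smul_add {A ι : Type*} [NormedRing A] [NormedAlgebra ℂ A]
    {l : Filter ι} {J : A} (hJ : J * J = -1) {x y : ι → ℝ} {N : ι → A} {c : ℝ}
    (hxy : Tendsto (fun i => y i - x i) l (nhds c)) (hN : Tendsto N l (nhds J)) :
    Tendsto (fun i => (Complex.cos (x i) • (1 : A) - Complex.sin (x i) • J) *
        (Complex.cos (y i) • (1 : A) + Complex.sin (y i) • N i)) l
      (nhds (Complex.cos c • (1 : A) + Complex.sin c • J)) := by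
  have hcos (r : ℝ) : ‖Complex.cos r‖ ≤ 1 := by
    rw [← Complex.ofReal_cos, Complex.norm_real]; exact Real.abs_cos_le_one r
  have hsin (r : ℝ) : ‖Complex.sin r‖ ≤ 1 := by
    rw [← Complex.ofReal_sin, Complex.norm_real]; exact Real.abs_sin_le_one r
  have hfixed (i : ι) : (Complex.cos (x i) • (1 : A) - Complex.sin (x i) • J) *
        (Complex.cos (y i) • (1 : A) + Complex.sin (y i) • J) =
      Complex.cos (y i - x i : ℝ) • (1 : A) + Complex.sin (y i - x i : ℝ) • J := by
    rw [sub_eq_add_neg, ← neg_smul, smul_one_add_smul_mul hJ, Complex.ofReal_sub, Complex.cos_sub,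
      Complex.sin_sub]
    ring_nf
  have hbdd : IsBoundedUnder (· ≤ ·) l
      fun i => ‖Complex.cos (x i) • (1 : A) - Complex.sin (x i) • J‖ := by
    refine isBoundedUnder_of ⟨‖(1 : A)‖ + ‖J‖, fun i => (norm_sub_le _ _).trans ?_⟩
    rw [norm_smul, norm_smul]
    exact add_le_add (mul_le_of_le_one_left (norm_nonneg _) (hcos _))
      (mul_le_of_le_one_left (norm_nonneg _) (hsin _))
  have hdrift : Tendsto (fun i => Complex.sin (y i) • (N i - J)) l (nhds 0) :=
    (isBoundedUnder_of ⟨1, fun i => hsin (y i)⟩).smul_tendsto_zero (tendsto_sub_nhds_zero_iff.2 hN)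
  have hlim : Tendsto (fun i => Complex.cos (y i - x i : ℝ) • (1 : A) +
      Complex.sin (y i - x i : ℝ) • J) l (nhds (Complex.cos c • (1 : A) + Complex.sin c • J)) :=
    ((by fun_prop : Continuous fun r : ℝ =>
      Complex.cos r • (1 : A) + Complex.sin r • J).tendsto c).comp hxy
  refine (add_zero (Complex.cos c • (1 : A) + Complex.sin c • J) ▸
    hlim.add (isBoundedUnder_le_mul_tendsto_zero hbdd hdrift)).congr fun i => ?_
  rw [← hfixed, ← mul_add, smul_sub, add_assoc, add_sub_cancel]

/-- The matrix `J` with `M = cos θ + sin θ J` and `J² = -1`, for a `2 × 2` matrix `M` of determinant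
`1` and trace `2 cos θ`; it is junk where `sin θ = 0`. -/
def rotationGenerator (M : Matrix (Fin 2) (Fin 2) ℂ) (θ : ℝ) : Matrix (Fin 2) (Fin 2) ℂ :=
  (Complex.sin θ)⁻¹ • (M - Complex.cos θ • (1 : Matrix (Fin 2) (Fin 2) ℂ))

variable {M : Matrix (Fin 2) (Fin 2) ℂ} {θ : ℝ}

lemma cos_smul_one_add_sin_smul_rotationGenerator (hθ : Real.sin θ ≠ 0) :
    Complex.cos θ • (1 : Matrix (Fin 2) (Fin 2) ℂ) + Complex.sin θ • rotationGenerator M θ = M := by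
  have h : Complex.sin θ ≠ 0 := by exact_mod_cast hθ
  rw [rotationGenerator, smul_inv_smul₀ h, add_sub_cancel]

lemma adjugate_fin_two_eq_trace_smul_sub {R : Type*} [CommRing R] (M : Matrix (Fin 2) (Fin 2) R) :
    M.adjugate = M.trace • (1 : Matrix (Fin 2) (Fin 2) R) - M := by
  ext i j
  fin_cases i <;> fin_cases j <;> simp [Matrix.adjugate_fin_two, Matrix.trace_fin_two]

lemma rotationGenerator_mul_self (hdet : M.det = 1) (htr : M.trace = 2 * Complex.cos θ)
    (hθ : Real.sin θ ≠ 0) : rotationGenerator M θ * rotationGenerator M θ = -1 := by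
  have h : Complex.sin θ ^ 2 ≠ 0 := pow_ne_zero 2 (by exact_mod_cast hθ)
  have hcayley : M * M = (2 * Complex.cos θ) • M - 1 := by
    have := M.mul_adjugate
    rw [adjugate_fin_two_eq_trace_smul_sub, hdet, htr, one_smul, mul_sub, mul_smul_comm,
      mul_one] at this
    rw [← this, sub_sub_cancel]
  have hsq : (M - Complex.cos θ • (1 : Matrix (Fin 2) (Fin 2) ℂ)) *
      (M - Complex.cos θ • (1 : Matrix (Fin 2) (Fin 2) ℂ)) =
        (Complex.sin θ ^ 2) • (-1 : Matrix (Fin 2) (Fin 2) ℂ) := by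
    rw [Complex.sin_sq]
    simp only [mul_sub, sub_mul, hcayley, smul_mul_assoc, mul_smul_comm, one_mul, mul_one]
    module
  rw [rotationGenerator, smul_mul_smul_comm, hsq, ← sq, inv_pow, inv_smul_smul₀ h]

lemma conjTranspose_rotationGenerator (hM : M ∈ Matrix.unitaryGroup (Fin 2) ℂ) (hdet : M.det = 1)
    (htr : M.trace = 2 * Complex.cos θ) :
    (rotationGenerator M θ)ᴴ = -rotationGenerator M θ := by
  have hadj : Mᴴ = (2 * Complex.cos θ) • (1 : Matrix (Fin 2) (Fin 2) ℂ) - M := by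
    rw [← htr, ← adjugate_fin_two_eq_trace_smul_sub]
    calc Mᴴ = Mᴴ * (M * M.adjugate) := by rw [M.mul_adjugate, hdet, one_smul, mul_one]
      _ = M.adjugate := by
        rw [← mul_assoc, ← Matrix.star_eq_conjTranspose, Matrix.mem_unitaryGroup_iff'.1 hM, one_mul]
  have hstar : star (Complex.cos θ) = Complex.cos θ := by
    rw [← Complex.ofReal_cos]; exact Complex.conj_ofReal _
  have hstar' : star (Complex.sin θ)⁻¹ = (Complex.sin θ)⁻¹ := by
    rw [← Complex.ofReal_sin, ← Complex.ofReal_inv]; exact Complex.conj_ofReal _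
  rw [rotationGenerator, Matrix.conjTranspose_smul, Matrix.conjTranspose_sub, hadj,
    Matrix.conjTranspose_smul, Matrix.conjTranspose_one, hstar, hstar']
  module

lemma pow_eq_cos_smul_one_add_sin_smul (hdet : M.det = 1) (htr : M.trace = 2 * Complex.cos θ)
    (hθ : Real.sin θ ≠ 0) (n : ℕ) :
    M ^ n = Complex.cos (n * θ : ℝ) • (1 : Matrix (Fin 2) (Fin 2) ℂ) +
      Complex.sin (n * θ : ℝ) • rotationGenerator M θ := by
  have h := cos_smul_one_add_sin_smul_pow (rotationGenerator_mul_self hdet htr hθ) θ n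
  rw [cos_smul_one_add_sin_smul_rotationGenerator hθ] at h
  exact_mod_cast h

lemma tendsto_conjTranspose_pow_mul_pow {ι : Type*} {l : Filter ι}
    {M : ℝ → Matrix (Fin 2) (Fin 2) ℂ} {θ : ℝ → ℝ} {k v c : ℝ} {δ : ι → ℝ} {n : ι → ℕ}
    (hM : ContinuousAt M k) (hU : M k ∈ Matrix.unitaryGroup (Fin 2) ℂ) (hdet : ∀ x, (M x).det = 1)
    (htr : ∀ x, (M x).trace = 2 * Complex.cos (θ x)) (hθ : HasDerivAt θ v k)
    (hsin : Real.sin (θ k) ≠ 0) (hδ : Tendsto δ l (nhds 0))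
    (hnδ : Tendsto (fun i => n i * δ i) l (nhds c)) :
    Tendsto (fun i => (M k ^ n i)ᴴ * M (k + δ i) ^ n i) l
      (nhds (Complex.cos (c * v : ℝ) • (1 : Matrix (Fin 2) (Fin 2) ℂ) +
        Complex.sin (c * v : ℝ) • rotationGenerator (M k) (θ k))) := by
  have hkδ : Tendsto (fun i => k + δ i) l (nhds k) := by simpa using hδ.const_add k
  have hphase : Tendsto (fun i => n i * θ (k + δ i) - n i * θ k) l (nhds (c * v)) := by
    have h := hθ.hasFDerivAt.hasFDerivWithinAt.lim hδ (.of_forall fun _ => Set.mem_univ _) hnδ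
    simpa [mul_sub] using h
  have hJ : Tendsto (fun i => rotationGenerator (M (k + δ i)) (θ (k + δ i))) l
      (nhds (rotationGenerator (M k) (θ k))) := by
    have h : ContinuousAt (fun x => rotationGenerator (M x) (θ x)) k := by
      have hθc := hθ.continuousAt
      have hsin' : Complex.sin (θ k) ≠ 0 := by exact_mod_cast hsin
      unfold rotationGenerator
      fun_prop (disch := assumption)
    exact h.tendsto.comp hkδ
  refine (tendsto_cos_smul_sub_mul_cos_smul_add
    (rotationGenerator_mul_self (hdet k) (htr k) hsin) hphase hJ).congr' ?_
  have hsin_ne : ∀ᶠ x in nhds k, Real.sin (θ x) ≠ 0 :=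
    (Real.continuous_sin.continuousAt.comp hθ.continuousAt).eventually_ne hsin
  filter_upwards [hkδ.eventually hsin_ne] with i hi
  rw [pow_eq_cos_smul_one_add_sin_smul (hdet k) (htr k) hsin,
    pow_eq_cos_smul_one_add_sin_smul (hdet _) (htr _) hi, Matrix.conjTranspose_add,
    Matrix.conjTranspose_smul, Matrix.conjTranspose_smul, Matrix.conjTranspose_one,
    conjTranspose_rotationGenerator hU (hdet k) (htr k), smul_neg, ← sub_eq_add_neg]
  simp only [← Complex.ofReal_cos, ← Complex.ofReal_sin, Complex.star_def, Complex.conj_ofReal]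

end Rotation

section TwoPeriod

/-- The evolution of the Fourier transform at the wave number `k` over one period of a walk whose
coin alternates between `U₀` and `U₁`. -/
def twoStep (U₀ U₁ : Matrix (Fin 2) (Fin 2) ℂ) (k : ℝ) : Matrix (Fin 2) (Fin 2) ℂ :=
  Rmat k * U₁ * (Rmat k * U₀)

variable {U₀ U₁ : Matrix (Fin 2) (Fin 2) ℂ} {ψ : ℕ → ℤ → Fin 2 → ℂ} {α β : ℂ}

@[fun_prop]
lemma continuous_twoStep (U₀ U₁ : Matrix (Fin 2) (Fin 2) ℂ) : Continuous (twoStep U₀ U₁) := by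
  unfold twoStep
  fun_prop

lemma twoStep_mem_unitaryGroup (h₀ : U₀ ∈ Matrix.unitaryGroup (Fin 2) ℂ)
    (h₁ : U₁ ∈ Matrix.unitaryGroup (Fin 2) ℂ) (k : ℝ) :
    twoStep U₀ U₁ k ∈ Matrix.unitaryGroup (Fin 2) ℂ :=
  mul_mem (mul_mem (Rmat_mem_unitaryGroup k) h₁) (mul_mem (Rmat_mem_unitaryGroup k) h₀)

lemma det_twoStep (U₀ U₁ : Matrix (Fin 2) (Fin 2) ℂ) (k : ℝ) :
    (twoStep U₀ U₁ k).det = (U₁ * U₀).det := by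
  have hR : (Rmat k).det = 1 := by simp [Rmat, ← Complex.exp_add]
  simp only [twoStep, Matrix.det_mul, hR, one_mul]

lemma QWEvolves.qwFourier_two_mul (hψ : QWEvolves (fun t => if Even t then U₀ else U₁) ψ)
    (h₀ : (Function.support (ψ 0)).Finite) (s : ℕ) (k : ℝ) :
    qwFourier (ψ (2 * s)) k = (twoStep U₀ U₁ k ^ s) *ᵥ qwFourier (ψ 0) k := by
  induction s with
  | zero => simp
  | succ s ih =>
    rw [show 2 * (s + 1) = 2 * s + 1 + 1 from rfl, hψ.qwFourier_succ (hψ.finite_support h₀ _),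
      hψ.qwFourier_succ (hψ.finite_support h₀ _), ih, if_pos (even_two_mul s),
      if_neg (by simp), pow_succ']
    simp only [twoStep, Matrix.mulVec_mulVec, mul_assoc]

lemma QWEvolves.qwOverlap_self_of_twoPeriod (hψ : QWEvolves (fun t => if Even t then U₀ else U₁) ψ)
    (hinit : QWInit α β ψ) (hU₀ : U₀ ∈ Matrix.unitaryGroup (Fin 2) ℂ)
    (hU₁ : U₁ ∈ Matrix.unitaryGroup (Fin 2) ℂ) (hαβ : Complex.normSq α + Complex.normSq β = 1)
    (t : ℕ) (k : ℝ) : qwOverlap (ψ t) k k = 1 := by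
  refine hψ.qwOverlap_self (fun t => ?_) hinit.finite_support (hinit.qwOverlap_self hαβ) t k
  split_ifs
  exacts [hU₀, hU₁]

lemma tendsto_natCast_half_mul_neg_div (ξ : ℝ) :
    Tendsto (fun t : ℕ => (t / 2 : ℕ) * (-ξ / t)) atTop (nhds (-(ξ / 2))) := by
  have h := (tendsto_nat_floor_mul_div_atTop (R := ℝ) (a := 1 / 2) (by norm_num)).comp
    tendsto_natCast_atTop_atTop
  have hfloor (t : ℕ) : ⌊(1 / 2 : ℝ) * t⌋₊ = t / 2 := by
    rw [one_div_mul_eq_div]; exact_mod_cast Nat.floor_div_eq_div (K := ℝ) t 2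
  simp only [Function.comp_def, hfloor] at h
  convert h.const_mul (-ξ) using 2 <;> ring

lemma QWEvolves.norm_qwOverlap_sub_two_mul_half_le
    (hψ : QWEvolves (fun t => if Even t then U₀ else U₁) ψ)
    (hU₀ : U₀ ∈ Matrix.unitaryGroup (Fin 2) ℂ) (h₀ : (Function.support (ψ 0)).Finite)
    (hnorm : ∀ t k, qwOverlap (ψ t) k k = 1) (t : ℕ) (k l : ℝ) :
    ‖qwOverlap (ψ t) k l - qwOverlap (ψ (2 * (t / 2))) k l‖ ≤ ‖Rmat (l - k) - 1‖ := by
  rcases Nat.even_or_odd t with ht | ht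
  · rw [Nat.two_mul_div_two_of_even ht, sub_self, norm_zero]
    exact norm_nonneg _
  · have h := hψ.norm_qwOverlap_succ_sub_le (t := 2 * (t / 2))
      (by rwa [if_pos (even_two_mul _)]) (hψ.finite_support h₀ _) (hnorm _) k l
    rwa [Nat.two_mul_div_two_add_one_of_odd ht] at h

lemma QWEvolves.tendsto_qwOverlap (hψ : QWEvolves (fun t => if Even t then U₀ else U₁) ψ)
    (hinit : QWInit α β ψ) (hU₀ : U₀ ∈ Matrix.unitaryGroup (Fin 2) ℂ)
    (hU₁ : U₁ ∈ Matrix.unitaryGroup (Fin 2) ℂ) (hαβ : Complex.normSq α + Complex.normSq β = 1)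
    (hdet : (U₁ * U₀).det = 1) {θ : ℝ → ℝ} {k v : ℝ}
    (htr : ∀ k, (twoStep U₀ U₁ k).trace = 2 * Complex.cos (θ k)) (hθ : HasDerivAt θ v k)
    (hsin : Real.sin (θ k) ≠ 0) (ξ : ℝ) :
    Tendsto (fun t : ℕ => qwOverlap (ψ t) k (k - ξ / t)) atTop
      (nhds (Complex.cos (ξ / 2 * v : ℝ) - Complex.sin (ξ / 2 * v : ℝ) *
        (star ![α, β] ⬝ᵥ (rotationGenerator (twoStep U₀ U₁ k) (θ k) *ᵥ ![α, β])))) := by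
  have hfin := hinit.finite_support
  have hnorm := hψ.qwOverlap_self_of_twoPeriod hinit hU₀ hU₁ hαβ
  have hδ : Tendsto (fun t : ℕ => -ξ / t) atTop (nhds 0) := tendsto_const_div_atTop_nhds_zero_nat _
  have hunit : star ![α, β] ⬝ᵥ ![α, β] = 1 := by
    rw [← hinit.qwFourier_eq k]; exact hnorm 0 k
  have heven : Tendsto (fun t : ℕ => qwOverlap (ψ (2 * (t / 2))) k (k - ξ / t)) atTop
      (nhds (Complex.cos (ξ / 2 * v : ℝ) - Complex.sin (ξ / 2 * v : ℝ) *
        (star ![α, β] ⬝ᵥ (rotationGenerator (twoStep U₀ U₁ k) (θ k) *ᵥ ![α, β])))) := by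
    have h := tendsto_conjTranspose_pow_mul_pow (continuous_twoStep U₀ U₁).continuousAt
      (twoStep_mem_unitaryGroup hU₀ hU₁ k) (fun x => (det_twoStep U₀ U₁ x).trans hdet) htr hθ
      hsin hδ (tendsto_natCast_half_mul_neg_div ξ)
    have hquad : Continuous fun N : Matrix (Fin 2) (Fin 2) ℂ =>
        star ![α, β] ⬝ᵥ (N *ᵥ ![α, β]) := by fun_prop
    have h' := (hquad.tendsto _).comp h
    simp only [Matrix.add_mulVec, Matrix.smul_mulVec, Matrix.one_mulVec, dotProduct_add,
      dotProduct_smul, hunit, neg_mul, Complex.ofReal_neg, Complex.cos_neg, Complex.sin_neg,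
      smul_eq_mul, mul_one, ← sub_eq_add_neg] at h'
    refine h'.congr fun t => ?_
    rw [Function.comp_apply, ← star_mulVec_dotProduct_mulVec, qwOverlap, hψ.qwFourier_two_mul hfin,
      hψ.qwFourier_two_mul hfin, hinit.qwFourier_eq, hinit.qwFourier_eq, neg_div, ← sub_eq_add_neg]
  have hRmat : Tendsto (fun t : ℕ => ‖Rmat (k - ξ / t - k) - 1‖) atTop (nhds 0) := by
    have h : Tendsto (fun x => ‖Rmat x - 1‖) (nhds 0) (nhds 0) := by
      simpa [Rmat_zero] using (by fun_prop : Continuous fun x => ‖Rmat x - 1‖).tendsto 0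
    refine (h.comp hδ).congr fun t => ?_
    rw [Function.comp_apply, neg_div, sub_sub_cancel_left]
  have hdiff := squeeze_zero_norm (fun t : ℕ =>
    hψ.norm_qwOverlap_sub_two_mul_half_le hU₀ hfin hnorm t k (k - ξ / t)) hRmat
  simpa using hdiff.add heven

end TwoPeriod

section Coin

/-- The orthogonal matrix of determinant `ε = ±1` with first row `(a, b)`, as a complex matrix.
Every real orthogonal `2 × 2` matrix is of this form. -/
def coin (ε a b : ℝ) : Matrix (Fin 2) (Fin 2) ℂ :=
  !![(a : ℂ), (b : ℂ); -(ε * b : ℂ), (ε * a : ℂ)]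

variable {ε a b a₀ b₀ a₁ b₁ : ℝ} {ψ : ℕ → ℤ → Fin 2 → ℂ} {α β : ℂ}

lemma det_coin (hab : a ^ 2 + b ^ 2 = 1) : (coin ε a b).det = ε := by
  have hC : (a : ℂ) ^ 2 + (b : ℂ) ^ 2 = 1 := by exact_mod_cast hab
  rw [coin, Matrix.det_fin_two_of]
  linear_combination (ε : ℂ) * hC

lemma coin_mem_unitaryGroup (hε : ε ^ 2 = 1) (hab : a ^ 2 + b ^ 2 = 1) :
    coin ε a b ∈ Matrix.unitaryGroup (Fin 2) ℂ := by
  have hεC : (ε : ℂ) ^ 2 = 1 := by exact_mod_cast hε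
  have hC : (a : ℂ) ^ 2 + (b : ℂ) ^ 2 = 1 := by exact_mod_cast hab
  have hstar : star (coin ε a b) = !![(a : ℂ), -(ε * b : ℂ); (b : ℂ), (ε * a : ℂ)] := by
    ext i j
    fin_cases i <;> fin_cases j <;> simp [coin]
  rw [Matrix.mem_unitaryGroup_iff, hstar, coin, Matrix.mul_fin_two, Matrix.one_fin_two]
  ext i j
  fin_cases i <;> fin_cases j <;> simp only [Fin.zero_eta, Fin.mk_one, Matrix.of_apply,
    Matrix.cons_val', Matrix.cons_val_zero, Matrix.cons_val_one, Matrix.cons_val_fin_one]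
  · linear_combination hC
  · ring
  · ring
  · linear_combination hC + (a ^ 2 + b ^ 2 : ℂ) * hεC

lemma twoStep_coin (hε : ε ^ 2 = 1) (a₀ b₀ a₁ b₁ k : ℝ) :
    twoStep (coin ε a₀ b₀) (coin ε a₁ b₁) k =
      !![Complex.exp (2 * k * I) * (a₀ * a₁) - ε * b₀ * b₁,
          Complex.exp (2 * k * I) * (a₁ * b₀) + ε * a₀ * b₁;
        -(Complex.exp (-(2 * k * I)) * (a₁ * b₀) + ε * a₀ * b₁),
          Complex.exp (-(2 * k * I)) * (a₀ * a₁) - ε * b₀ * b₁] := by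
  have hεC : (ε : ℂ) ^ 2 = 1 := by exact_mod_cast hε
  have hinv : Complex.exp (I * k) * Complex.exp (-(I * k)) = 1 := by
    rw [← Complex.exp_add, add_neg_cancel, Complex.exp_zero]
  have hsq : Complex.exp (2 * k * I) = Complex.exp (I * k) ^ 2 := by
    rw [← Complex.exp_nat_mul]; congr 1; push_cast; ring
  have hsq' : Complex.exp (-(2 * k * I)) = Complex.exp (-(I * k)) ^ 2 := by
    rw [← Complex.exp_nat_mul]; congr 1; push_cast; ring
  rw [hsq, hsq']
  simp only [twoStep, Rmat, coin, Matrix.mul_fin_two, zero_mul, add_zero, zero_add]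
  ext i j
  fin_cases i <;> fin_cases j <;> simp only [Fin.zero_eta, Fin.mk_one, Matrix.of_apply,
    Matrix.cons_val', Matrix.cons_val_zero, Matrix.cons_val_one, Matrix.cons_val_fin_one]
  · linear_combination -(ε * b₀ * b₁ : ℂ) * hinv
  · linear_combination (ε * a₀ * b₁ : ℂ) * hinv
  · linear_combination -(ε * a₀ * b₁ : ℂ) * hinv -
      (Complex.exp (-(I * k)) ^ 2 * a₁ * b₀ : ℂ) * hεC
  · linear_combination -(ε * b₀ * b₁ : ℂ) * hinv +
      (Complex.exp (-(I * k)) ^ 2 * a₀ * a₁ : ℂ) * hεC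

lemma trace_twoStep_coin (hε : ε ^ 2 = 1) (a₀ b₀ a₁ b₁ k : ℝ) :
    (twoStep (coin ε a₀ b₀) (coin ε a₁ b₁) k).trace =
      2 * ((a₀ * a₁ * Real.cos (2 * k) - ε * b₀ * b₁ : ℝ) : ℂ) := by
  rw [twoStep_coin hε, Matrix.trace_fin_two_of]
  push_cast
  rw [Complex.cos, neg_mul]
  ring

/-- Changing the sign of `k` changes the quadratic form by a multiple of
`a₀ (|α|² - |β|²) + 2 b₀ Re (ᾱ β)`. -/
lemma star_dotProduct_twoStep_coin_neg_mulVec (hε : ε ^ 2 = 1)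
    (hsym : a₀ * (Complex.normSq α - Complex.normSq β) +
      2 * b₀ * (starRingEnd ℂ α * β).re = 0) (k : ℝ) :
    star ![α, β] ⬝ᵥ (twoStep (coin ε a₀ b₀) (coin ε a₁ b₁) (-k) *ᵥ ![α, β]) =
      star ![α, β] ⬝ᵥ (twoStep (coin ε a₀ b₀) (coin ε a₁ b₁) k *ᵥ ![α, β]) := by
  have hre : (starRingEnd ℂ α * β + starRingEnd ℂ β * α : ℂ) =
      2 * ((starRingEnd ℂ α * β).re : ℂ) := by
    have := Complex.add_conj (starRingEnd ℂ α * β)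
    simp only [map_mul, Complex.conj_conj] at this
    push_cast at this
    linear_combination this
  have hsymC : (a₀ : ℂ) * (starRingEnd ℂ α * α - starRingEnd ℂ β * β) +
      b₀ * (starRingEnd ℂ α * β + starRingEnd ℂ β * α) = 0 := by
    rw [hre, ← Complex.normSq_eq_conj_mul_self, ← Complex.normSq_eq_conj_mul_self]
    have : ((a₀ * (Complex.normSq α - Complex.normSq β) +
      2 * b₀ * (starRingEnd ℂ α * β).re : ℝ) : ℂ) = 0 := by rw [hsym, Complex.ofReal_zero]
    push_cast at this
    linear_combination this
  have hquad (p q r s : ℂ) : star ![α, β] ⬝ᵥ (!![p, q; r, s] *ᵥ ![α, β]) =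
      α * (starRingEnd ℂ α * p + starRingEnd ℂ β * r) +
        β * (starRingEnd ℂ α * q + starRingEnd ℂ β * s) := by
    simp [Matrix.vecHead, Matrix.vecTail]
  rw [twoStep_coin hε, twoStep_coin hε, hquad, hquad]
  rw [Complex.ofReal_neg, mul_neg, neg_mul, neg_neg]
  linear_combination
    (a₁ * (Complex.exp (-(2 * k * I)) - Complex.exp (2 * k * I)) : ℂ) * hsymC

end Coin

section Limit

variable {ε a₀ b₀ a₁ b₁ : ℝ} {ψ : ℕ → ℤ → Fin 2 → ℂ} {α β : ℂ}

lemma tendsto_charFun_qwMeasure_of_tendsto_qwOverlap_add {g : ℝ → ℂ} {ξ : ℝ}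
    (hfin : ∀ t, (Function.support (ψ t)).Finite) (hnorm : ∀ t k, qwOverlap (ψ t) k k = 1)
    (hlim : ∀ᵐ k : ℝ, Tendsto
      (fun t : ℕ => qwOverlap (ψ t) k (k - ξ / t) + qwOverlap (ψ t) (-k) (-k - ξ / t)) atTop
      (nhds (g k))) :
    Tendsto (fun t => charFun (qwMeasure ψ t) ξ) atTop
      (nhds ((4 * Real.pi : ℂ)⁻¹ * ∫ k in -Real.pi..Real.pi, g k)) := by
  have hcont (t : ℕ) := continuous_qwOverlap_sub (hfin t) (ξ / t)
  have hcont_neg (t : ℕ) : Continuous fun k => qwOverlap (ψ t) (-k) (-k - ξ / t) :=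
    (hcont t).comp continuous_neg
  have hsum (t : ℕ) : ∫ k in -Real.pi..Real.pi,
      (qwOverlap (ψ t) k (k - ξ / t) + qwOverlap (ψ t) (-k) (-k - ξ / t)) =
        2 * ∫ k in -Real.pi..Real.pi, qwOverlap (ψ t) k (k - ξ / t) := by
    have hneg := intervalIntegral.integral_comp_neg (a := -Real.pi) (b := Real.pi)
      fun k => qwOverlap (ψ t) k (k - ξ / t)
    rw [neg_neg] at hneg
    rw [intervalIntegral.integral_add ((hcont t).intervalIntegrable _ _)
      ((hcont_neg t).intervalIntegrable _ _), hneg, two_mul]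
  have hdom : Tendsto (fun t : ℕ => ∫ k in -Real.pi..Real.pi,
      (qwOverlap (ψ t) k (k - ξ / t) + qwOverlap (ψ t) (-k) (-k - ξ / t))) atTop
      (nhds (∫ k in -Real.pi..Real.pi, g k)) :=
    intervalIntegral.tendsto_integral_filter_of_dominated_convergence (fun _ => 1 + 1)
      (.of_forall fun t => ((hcont t).add (hcont_neg t)).aestronglyMeasurable)
      (.of_forall fun t => .of_forall fun k _ => (norm_add_le _ _).trans
        (add_le_add (norm_qwOverlap_le_one (hnorm t) _ _) (norm_qwOverlap_le_one (hnorm t) _ _)))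
      intervalIntegrable_const (hlim.mono fun k hk _ => hk)
  refine (hdom.const_mul (4 * Real.pi : ℂ)⁻¹).congr fun t => ?_
  rw [hsum, charFun_qwMeasure (hfin t)]
  ring

lemma sq_mul_mul_eq_one_sub_sq_mul_one_sub_sq (hε : ε ^ 2 = 1) (h₀ : a₀ ^ 2 + b₀ ^ 2 = 1)
    (h₁ : a₁ ^ 2 + b₁ ^ 2 = 1) : (ε * b₀ * b₁) ^ 2 = (1 - a₀ ^ 2) * (1 - a₁ ^ 2) := by
  rw [mul_pow, mul_pow, hε, one_mul, ← h₀, add_sub_cancel_left, h₀, ← h₁, add_sub_cancel_left]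

lemma abs_mul_add_abs_mul_mul_le_one (hε : ε ^ 2 = 1) (h₀ : a₀ ^ 2 + b₀ ^ 2 = 1)
    (h₁ : a₁ ^ 2 + b₁ ^ 2 = 1) : |a₀ * a₁| + |ε * b₀ * b₁| ≤ 1 := by
  refine abs_add_abs_le_one_of_sq (m := |a₀|) (M := |a₁|) ?_ ?_ (abs_mul _ _) ?_ <;>
    simp only [sq_abs]
  · nlinarith
  · nlinarith
  · exact sq_mul_mul_eq_one_sub_sq_mul_one_sub_sq hε h₀ h₁

lemma abs_mul_cos_sub_le_one (hε : ε ^ 2 = 1) (h₀ : a₀ ^ 2 + b₀ ^ 2 = 1)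
    (h₁ : a₁ ^ 2 + b₁ ^ 2 = 1) (φ : ℝ) : |a₀ * a₁ * Real.cos φ - ε * b₀ * b₁| ≤ 1 :=
  calc |a₀ * a₁ * Real.cos φ - ε * b₀ * b₁|
      ≤ |a₀ * a₁| * |Real.cos φ| + |ε * b₀ * b₁| := abs_dispersion_le _ _ _
    _ ≤ |a₀ * a₁| * 1 + |ε * b₀ * b₁| := by gcongr; exact Real.abs_cos_le_one φ
    _ ≤ 1 := by rw [mul_one]; exact abs_mul_add_abs_mul_mul_le_one hε h₀ h₁

lemma QWEvolves.tendsto_qwOverlap_coin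
    (hψ : QWEvolves (fun t => if Even t then coin ε a₀ b₀ else coin ε a₁ b₁) ψ)
    (hinit : QWInit α β ψ) (hε : ε ^ 2 = 1) (h₀ : a₀ ^ 2 + b₀ ^ 2 = 1)
    (h₁ : a₁ ^ 2 + b₁ ^ 2 = 1) (hαβ : Complex.normSq α + Complex.normSq β = 1) {k : ℝ}
    (hk : (a₀ * a₁ * Real.cos (2 * k) - ε * b₀ * b₁) ^ 2 < 1) (ξ : ℝ) :
    Tendsto (fun t : ℕ => qwOverlap (ψ t) k (k - ξ / t)) atTop
      (nhds (Complex.cos (ξ * groupVelocity (a₀ * a₁) (ε * b₀ * b₁) (2 * k) : ℝ) -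
        Complex.sin (ξ * groupVelocity (a₀ * a₁) (ε * b₀ * b₁) (2 * k) : ℝ) *
          (star ![α, β] ⬝ᵥ (rotationGenerator (twoStep (coin ε a₀ b₀) (coin ε a₁ b₁) k)
            (Real.arccos (a₀ * a₁ * Real.cos (2 * k) - ε * b₀ * b₁)) *ᵥ ![α, β])))) := by
  have htrace (x : ℝ) : (twoStep (coin ε a₀ b₀) (coin ε a₁ b₁) x).trace =
      2 * Complex.cos (Real.arccos (a₀ * a₁ * Real.cos (2 * x) - ε * b₀ * b₁)) := by
    have hle := abs_mul_cos_sub_le_one hε h₀ h₁ (2 * x)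
    rw [trace_twoStep_coin hε, ← Complex.ofReal_cos, Real.cos_arccos (neg_le_of_abs_le hle)
      (le_of_abs_le hle)]
  have hdet : (coin ε a₁ b₁ * coin ε a₀ b₀).det = 1 := by
    rw [Matrix.det_mul, det_coin h₀, det_coin h₁, ← sq]
    exact_mod_cast hε
  have hsin : Real.sin (Real.arccos (a₀ * a₁ * Real.cos (2 * k) - ε * b₀ * b₁)) ≠ 0 := by
    rw [Real.sin_arccos]
    exact (Real.sqrt_pos.2 (sub_pos.2 hk)).ne'
  have h := hψ.tendsto_qwOverlap hinit (coin_mem_unitaryGroup hε h₀) (coin_mem_unitaryGroup hε h₁)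
    hαβ hdet htrace
    ((hasDerivAt_arccos_dispersion hk).comp k ((hasDerivAt_id k).const_mul 2)) hsin ξ
  rwa [show ∀ v : ℝ, ξ / 2 * (v * (2 * 1)) = ξ * v by intro v; ring] at h

lemma QWEvolves.tendsto_qwOverlap_add_qwOverlap_neg
    (hψ : QWEvolves (fun t => if Even t then coin ε a₀ b₀ else coin ε a₁ b₁) ψ)
    (hinit : QWInit α β ψ) (hε : ε ^ 2 = 1) (h₀ : a₀ ^ 2 + b₀ ^ 2 = 1)
    (h₁ : a₁ ^ 2 + b₁ ^ 2 = 1) (hαβ : Complex.normSq α + Complex.normSq β = 1)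
    (hsym : a₀ * (Complex.normSq α - Complex.normSq β) +
      2 * b₀ * (starRingEnd ℂ α * β).re = 0) {k : ℝ}
    (hk : (a₀ * a₁ * Real.cos (2 * k) - ε * b₀ * b₁) ^ 2 < 1) (ξ : ℝ) :
    Tendsto (fun t : ℕ => qwOverlap (ψ t) k (k - ξ / t) + qwOverlap (ψ t) (-k) (-k - ξ / t)) atTop
      (nhds ((2 * Real.cos (ξ * groupVelocity (a₀ * a₁) (ε * b₀ * b₁) (2 * k)) : ℝ) : ℂ)) := by
  have hneg := hψ.tendsto_qwOverlap_coin hinit hε h₀ h₁ hαβ (k := -k)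
    (by rwa [mul_neg, Real.cos_neg]) ξ
  have hgen (θ : ℝ) :
      star ![α, β] ⬝ᵥ
          (rotationGenerator (twoStep (coin ε a₀ b₀) (coin ε a₁ b₁) (-k)) θ *ᵥ ![α, β]) =
        star ![α, β] ⬝ᵥ
          (rotationGenerator (twoStep (coin ε a₀ b₀) (coin ε a₁ b₁) k) θ *ᵥ ![α, β]) := by
    simp only [rotationGenerator, Matrix.smul_mulVec, Matrix.sub_mulVec, dotProduct_smul,
      dotProduct_sub, star_dotProduct_twoStep_coin_neg_mulVec hε hsym]
  rw [mul_neg, Real.cos_neg, groupVelocity_neg, hgen, mul_neg, Complex.ofReal_neg,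
    Complex.cos_neg, Complex.sin_neg] at hneg
  convert (hψ.tendsto_qwOverlap_coin hinit hε h₀ h₁ hαβ hk ξ).add hneg using 2
  push_cast
  ring

lemma ae_sin_two_mul_ne_zero : ∀ᵐ k : ℝ, Real.sin (2 * k) ≠ 0 := by
  have hcount : {k : ℝ | Real.sin (2 * k) = 0}.Countable := by
    refine (Set.countable_range fun n : ℤ => n * Real.pi / 2).mono fun k hk => ?_
    obtain ⟨n, hn⟩ := Real.sin_eq_zero_iff.1 hk
    exact ⟨n, by linarith⟩
  exact hcount.ae_notMem volume

lemma integral_comp_two_mul_of_even {f : ℝ → ℝ} (hper : Function.Periodic f (2 * Real.pi))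
    (heven : ∀ x, f (-x) = f x) (hf : ∀ a b, IntervalIntegrable f volume a b) :
    ∫ k in -Real.pi..Real.pi, f (2 * k) = 2 * ∫ x in 0..Real.pi, f x := by
  have hneg (a : ℝ) : ∫ x in -a..0, f x = ∫ x in 0..a, f x := by
    have h := intervalIntegral.integral_comp_neg (a := 0) (b := a) f
    simpa [heven] using h.symm
  have hshift := hper.intervalIntegral_add_eq 0 (-Real.pi)
  rw [zero_add, neg_add_eq_sub, two_mul, add_sub_cancel_right, ← two_mul] at hshift
  rw [intervalIntegral.integral_comp_mul_left f two_ne_zero, mul_neg,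
    ← intervalIntegral.integral_add_adjacent_intervals (hf _ 0) (hf 0 _), hneg, hshift,
    ← intervalIntegral.integral_add_adjacent_intervals (hf _ 0) (hf 0 _), hneg, smul_eq_mul]
  ring

lemma integral_cos_mul_groupVelocity_two_mul (A B ξ : ℝ) :
    ∫ k in -Real.pi..Real.pi, Real.cos (ξ * groupVelocity A B (2 * k)) =
      2 * ∫ φ in 0..Real.pi, Real.cos (ξ * groupVelocity A B φ) := by
  refine integral_comp_two_mul_of_even (f := fun φ => Real.cos (ξ * groupVelocity A B φ))
    (fun φ => by simp only [groupVelocity, Real.sin_add_two_pi, Real.cos_add_two_pi])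
    (fun φ => by rw [groupVelocity_neg, mul_neg, Real.cos_neg]) fun a b => ?_
  exact (intervalIntegrable_const (c := (1 : ℝ))).mono_fun
    (by fun_prop : Measurable _).aestronglyMeasurable
    (.of_forall fun φ => by simpa using Real.abs_cos_le_one _)

lemma QWEvolves.tendsto_charFun_qwMeasure
    (hψ : QWEvolves (fun t => if Even t then coin ε a₀ b₀ else coin ε a₁ b₁) ψ)
    (hinit : QWInit α β ψ) (hε : ε ^ 2 = 1) (ha₀ : a₀ ≠ 0) (ha₁ : a₁ ≠ 0)
    (h₀ : a₀ ^ 2 + b₀ ^ 2 = 1) (h₁ : a₁ ^ 2 + b₁ ^ 2 = 1)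
    (hαβ : Complex.normSq α + Complex.normSq β = 1)
    (hsym : a₀ * (Complex.normSq α - Complex.normSq β) +
      2 * b₀ * (starRingEnd ℂ α * β).re = 0) (ξ : ℝ) :
    Tendsto (fun t => charFun (qwMeasure ψ t) ξ) atTop
      (nhds ((1 / Real.pi * ∫ φ in 0..Real.pi,
        Real.cos (ξ * groupVelocity (a₀ * a₁) (ε * b₀ * b₁) φ) : ℝ) : ℂ)) := by
  have h := tendsto_charFun_qwMeasure_of_tendsto_qwOverlap_add
    (hψ.finite_support hinit.finite_support)
    (hψ.qwOverlap_self_of_twoPeriod hinit (coin_mem_unitaryGroup hε h₀)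
      (coin_mem_unitaryGroup hε h₁) hαβ)
    (ae_sin_two_mul_ne_zero.mono fun k hk => hψ.tendsto_qwOverlap_add_qwOverlap_neg hinit hε h₀ h₁
      hαβ hsym (sq_dispersion_lt_one (mul_ne_zero ha₀ ha₁)
        (abs_mul_add_abs_mul_mul_le_one hε h₀ h₁) hk) ξ)
  rw [intervalIntegral.integral_ofReal, intervalIntegral.integral_const_mul,
    integral_cos_mul_groupVelocity_two_mul] at h
  convert h using 2
  have hpi : (Real.pi : ℂ) ≠ 0 := by exact_mod_cast Real.pi_ne_zero
  push_cast
  field_simp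
  norm_num

theorem QWEvolves.qwWeakLimit_konnoDensity
    (hψ : QWEvolves (fun t => if Even t then coin ε a₀ b₀ else coin ε a₁ b₁) ψ)
    (hinit : QWInit α β ψ) (hε : ε ^ 2 = 1) (ha₀ : a₀ ≠ 0) (ha₁ : a₁ ≠ 0)
    (h₀ : a₀ ^ 2 + b₀ ^ 2 = 1) (h₁ : a₁ ^ 2 + b₁ ^ 2 = 1) (hlt : min |a₀| |a₁| < 1)
    (hαβ : Complex.normSq α + Complex.normSq β = 1)
    (hsym : a₀ * (Complex.normSq α - Complex.normSq β) +
      2 * b₀ * (starRingEnd ℂ α * β).re = 0) :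
    qwWeakLimit ψ (konnoDensity (min |a₀| |a₁|)) := by
  have hm : 0 < min |a₀| |a₁| := lt_min (abs_pos.2 ha₀) (abs_pos.2 ha₁)
  have hM : max |a₀| |a₁| ≤ 1 :=
    max_le (abs_le_one_iff_mul_self_le_one.2 (by nlinarith))
      (abs_le_one_iff_mul_self_le_one.2 (by nlinarith))
  have hA : |a₀ * a₁| = min |a₀| |a₁| * max |a₀| |a₁| := by rw [min_mul_max, abs_mul]
  have hB : (ε * b₀ * b₁) ^ 2 = (1 - min |a₀| |a₁| ^ 2) * (1 - max |a₀| |a₁| ^ 2) := by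
    have hprod : (ε * b₀ * b₁) ^ 2 = (1 - |a₀| ^ 2) * (1 - |a₁| ^ 2) := by
      rw [sq_abs, sq_abs, sq_mul_mul_eq_one_sub_sq_mul_one_sub_sq hε h₀ h₁]
    rcases le_total |a₀| |a₁| with h | h
    · rw [min_eq_left h, max_eq_right h, hprod]
    · rw [min_eq_right h, max_eq_left h, hprod, mul_comm]
  refine qwWeakLimit_of_tendsto_charFun (measurable_konnoDensity _) (konnoDensity_nonneg _)
    (isProbabilityMeasure_konnoLaw hm hlt) (fun t => isProbabilityMeasure_qwMeasure
      (hψ.finite_support hinit.finite_support t)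
      (hψ.qwOverlap_self_of_twoPeriod hinit (coin_mem_unitaryGroup hε h₀)
        (coin_mem_unitaryGroup hε h₁) hαβ t)) fun ξ => ?_
  rw [← konnoLaw, charFun_konnoLaw hm min_le_max hlt hM hA hB]
  exact hψ.tendsto_charFun_qwMeasure hinit hε ha₀ ha₁ h₀ h₁ hαβ hsym ξ

end Limit

section Orthogonal

lemma sq_det_eq_one_of_transpose_mul_self {n R : Type*} [Fintype n] [DecidableEq n] [CommRing R]
    {M : Matrix n n R} (hM : Mᵀ * M = 1) : M.det ^ 2 = 1 := by
  have h := congrArg Matrix.det hM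
  rwa [Matrix.det_mul, Matrix.det_transpose, Matrix.det_one, ← sq] at h

lemma sq_add_sq_eq_one_of_transpose_mul_self {R : Type*} [CommRing R] {a b c d : R}
    (h : (!![a, b; c, d])ᵀ * !![a, b; c, d] = 1) : a ^ 2 + b ^ 2 = 1 := by
  have hrow : (!![a, b; c, d] * (!![a, b; c, d])ᵀ) 0 0 = 1 := by
    rw [mul_eq_one_comm.1 h, Matrix.one_apply_eq]
  simpa [Matrix.mul_apply, Fin.sum_univ_two, sq] using hrow

lemma eq_coin_of_transpose_mul_self {a b c d : ℝ}
    (h : (!![a, b; c, d])ᵀ * !![a, b; c, d] = 1) :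
    !![(a : ℂ), (b : ℂ); (c : ℂ), (d : ℂ)] = coin (!![a, b; c, d]).det a b := by
  have hadj : (!![a, b; c, d]).det • (!![a, b; c, d])ᵀ = !![d, -b; -c, a] := by
    rw [← Matrix.adjugate_fin_two_of, ← mul_one (!![a, b; c, d])ᵀ, ← mul_smul_comm,
      ← Matrix.mul_adjugate, ← mul_assoc, h, one_mul]
  have hd : (!![a, b; c, d]).det * a = d := congrFun (congrFun hadj 0) 0
  have hc : (!![a, b; c, d]).det * b = -c := congrFun (congrFun hadj 1) 0
  rw [coin, ← Complex.ofReal_mul, ← Complex.ofReal_mul, hc, hd, Complex.ofReal_neg, neg_neg]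

lemma eq_of_sq_eq_one_of_mul_pos {x y : ℝ} (hx : x ^ 2 = 1) (hy : y ^ 2 = 1) (h : 0 < y * x) :
    y = x := by
  rcases sq_eq_sq_iff_eq_or_eq_neg.1 (hy.trans hx.symm) with h' | h'
  · exact h'
  · rw [h'] at h
    nlinarith

lemma symmetry_condition_iff {a b : ℝ} (ha : a ≠ 0) (α β : ℂ) :
    Complex.normSq α - Complex.normSq β +
        ((α * starRingEnd ℂ β + starRingEnd ℂ α * β) * (b : ℂ) / (a : ℂ)).re = 0 ↔
      a * (Complex.normSq α - Complex.normSq β) + 2 * b * (starRingEnd ℂ α * β).re = 0 := by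
  have hre : ((α * starRingEnd ℂ β + starRingEnd ℂ α * β) * (b : ℂ) / (a : ℂ)).re =
      2 * (starRingEnd ℂ α * β).re * b / a := by
    rw [Complex.div_ofReal_re, Complex.re_mul_ofReal]
    simp only [Complex.add_re, Complex.mul_re, Complex.conj_re, Complex.conj_im]
    ring
  rw [hre, ← mul_eq_zero_iff_left ha]
  field_simp

end Orthogonal

/-- Two-period QW with orthogonal coins, `det(H₁H₀) > 0`, symmetric initial state:
`X_t/t ⇒ Z` with density exactly `f_K(x; a_ξ)`, where `|a_ξ| = min{|a₀|, |a₁|}`. -/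
theorem two_period_QW_weak_limit_symmetric
    (a₀ b₀ c₀ d₀ a₁ b₁ c₁ d₁ : ℝ)
    (hne : a₀ ≠ 0 ∧ b₀ ≠ 0 ∧ c₀ ≠ 0 ∧ d₀ ≠ 0 ∧ a₁ ≠ 0 ∧ b₁ ≠ 0 ∧ c₁ ≠ 0 ∧ d₁ ≠ 0)
    (horth₀ : Matrix.transpose (!![a₀, b₀; c₀, d₀] : Matrix (Fin 2) (Fin 2) ℝ) * !![a₀, b₀; c₀, d₀] = 1)
    (horth₁ : Matrix.transpose (!![a₁, b₁; c₁, d₁] : Matrix (Fin 2) (Fin 2) ℝ) * !![a₁, b₁; c₁, d₁] = 1)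
    (hdet : 0 < ((!![a₁, b₁; c₁, d₁] : Matrix (Fin 2) (Fin 2) ℝ) * !![a₀, b₀; c₀, d₀]).det)
    (α β : ℂ) (hαβ : Complex.normSq α + Complex.normSq β = 1)
    (ψ : ℕ → ℤ → Fin 2 → ℂ)
    (hinit : QWInit α β ψ)
    (hsym : Complex.normSq α - Complex.normSq β +
      ((α * (starRingEnd ℂ) β + (starRingEnd ℂ) α * β) * (b₀ : ℂ) / (a₀ : ℂ)).re = 0)
    (hevol : QWEvolves
      (fun t => if Even t then !![(a₀ : ℂ), (b₀ : ℂ); (c₀ : ℂ), (d₀ : ℂ)]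
                else !![(a₁ : ℂ), (b₁ : ℂ); (c₁ : ℂ), (d₁ : ℂ)]) ψ) :
    qwWeakLimit ψ (fun x => konnoDensity (min |a₀| |a₁|) x) := by
  obtain ⟨ha₀, hb₀, -, -, ha₁, -⟩ := hne
  have h₀ := sq_add_sq_eq_one_of_transpose_mul_self horth₀
  have h₁ := sq_add_sq_eq_one_of_transpose_mul_self horth₁
  have hε := sq_det_eq_one_of_transpose_mul_self horth₀
  rw [Matrix.det_mul] at hdet
  have hdet_eq := eq_of_sq_eq_one_of_mul_pos hε (sq_det_eq_one_of_transpose_mul_self horth₁) hdet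
  have hlt : |a₀| < 1 :=
    (sq_lt_one_iff_abs_lt_one a₀).1 (h₀ ▸ lt_add_of_pos_right _ (sq_pos_of_ne_zero hb₀))
  rw [eq_coin_of_transpose_mul_self horth₀, eq_coin_of_transpose_mul_self horth₁, hdet_eq] at hevol
  exact hevol.qwWeakLimit_konnoDensity hinit hε ha₀ ha₁ h₀ h₁ (min_lt_of_left_lt hlt) hαβ
    ((symmetry_condition_iff ha₀ α β).1 hsym)
end
end

section
/- Let θ₀, θ₁ ∈ ℝ, set H_γ = [[cos θ_γ, sin θ_γ], [sin θ_γ, −cos θ_γ]] for γ = 0,1, and for k ∈ [0, 2π) set R(k) = [[e^{ik}, 0],[0, e^{−ik}]] and Ĥ_γ(k) = R(k) H_γ. Then the eigenvalues of the 2×2 matrix Ĥ₁(k) Ĥ₀(k) are exactly λ_j(k) = cos θ₀ cos θ₁ cos 2k + sin θ₀ sin θ₁ + (−1)^j · i · √(1 − (cos θ₀ cos θ₁ cos 2k + sin θ₀ sin θ₁)²) for j = 0, 1. (Equivalently, the characteristic polynomial of Ĥ₁(k)Ĥ₀(k) is λ² − 2(cos θ₀ cos θ₁ cos 2k + sin θ₀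 sin θ₁)λ + 1, and |cos θ₀ cos θ₁ cos 2k + sin θ₀ sin θ₁| ≤ 1 so the square root is real.) -/
open MeasureTheory Complex Filter

noncomputable section

/-- `H_γ = [[cos θ, sin θ], [sin θ, -cos θ]]` as a complex matrix. -/
def Hcoin (θ : ℝ) : Matrix (Fin 2) (Fin 2) ℂ :=
  !![(Real.cos θ : ℂ), (Real.sin θ : ℂ); (Real.sin θ : ℂ), (-(Real.cos θ) : ℂ)]

/-- `p = cos θ₀ cos θ₁ cos 2k + sin θ₀ sin θ₁`. -/
def eigP (θ₀ θ₁ k : ℝ) : ℝ :=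
  Real.cos θ₀ * Real.cos θ₁ * Real.cos (2 * k) + Real.sin θ₀ * Real.sin θ₁

/-! The matrix `Ĥ₁(k) Ĥ₀(k)` has determinant `(-1) * (-1) = 1` and trace `2p`, so its eigenvalues
are the two numbers with sum `2p` and product `1`. They lie on the unit circle because
`p = cos² k * cos (θ₀ - θ₁) - sin² k * cos (θ₀ + θ₁)` is a convex combination of
`cos (θ₀ - θ₁)` and `-cos (θ₀ + θ₁)`, both in `[-1, 1]`. -/

theorem spectrum_eq_pair_of_trace_of_det {K : Type*} [Field K] {A : Matrix (Fin 2) (Fin 2) K}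
    {a b : K} (htrace : A.trace = a + b) (hdet : A.det = a * b) : spectrum K A = {a, b} := by
  ext μ
  have charpoly_eval : A.charpoly.eval μ = (μ - a) * (μ - b) := by
    simp only [Matrix.charpoly_fin_two, htrace, hdet, Polynomial.eval_add, Polynomial.eval_sub,
      Polynomial.eval_mul, Polynomial.eval_pow, Polynomial.eval_X, Polynomial.eval_C]
    ring
  rw [Matrix.mem_spectrum_iff_isRoot_charpoly, Polynomial.IsRoot.def, charpoly_eval, mul_eq_zero,
    sub_eq_zero, sub_eq_zero, Set.mem_insert_iff, Set.mem_singleton_iff]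

theorem add_I_mul_sqrt_mul_sub_I_mul_sqrt {p : ℝ} (hp : |p| ≤ 1) :
    ((p : ℂ) + I * (Real.sqrt (1 - p ^ 2) : ℂ)) * (p - I * (Real.sqrt (1 - p ^ 2) : ℂ)) = 1 := by
  have sq_sqrt : (Real.sqrt (1 - p ^ 2) : ℂ) ^ 2 = 1 - (p : ℂ) ^ 2 := by
    exact_mod_cast Real.sq_sqrt (sub_nonneg.mpr ((sq_le_one_iff_abs_le_one p).mpr hp))
  linear_combination sq_sqrt - (Real.sqrt (1 - p ^ 2) : ℂ) ^ 2 * I_sq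

theorem spectrum_eq_of_det_eq_one_of_trace_eq {A : Matrix (Fin 2) (Fin 2) ℂ} {p : ℝ}
    (hdet : A.det = 1) (htrace : A.trace = 2 * p) (hp : |p| ≤ 1) :
    spectrum ℂ A =
      {(p : ℂ) + I * (Real.sqrt (1 - p ^ 2) : ℂ), (p : ℂ) - I * (Real.sqrt (1 - p ^ 2) : ℂ)} := by
  refine spectrum_eq_pair_of_trace_of_det ?_ ?_
  · rw [htrace]
    ring
  · rw [hdet, add_I_mul_sqrt_mul_sub_I_mul_sqrt hp]

theorem eigP_eq_cos_sq_mul_sub_sin_sq_mul (θ₀ θ₁ k : ℝ) :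
    eigP θ₀ θ₁ k =
      Real.cos k ^ 2 * Real.cos (θ₀ - θ₁) - Real.sin k ^ 2 * Real.cos (θ₀ + θ₁) := by
  rw [eigP, Real.cos_two_mul', Real.cos_sub, Real.cos_add]
  linear_combination -Real.sin θ₀ * Real.sin θ₁ * Real.sin_sq_add_cos_sq k

theorem abs_eigP_le_one (θ₀ θ₁ k : ℝ) : |eigP θ₀ θ₁ k| ≤ 1 :=
  calc |eigP θ₀ θ₁ k|
      ≤ |Real.cos k ^ 2 * Real.cos (θ₀ - θ₁)| + |Real.sin k ^ 2 * Real.cos (θ₀ + θ₁)| := by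
        rw [eigP_eq_cos_sq_mul_sub_sin_sq_mul]
        exact abs_sub _ _
    _ = Real.cos k ^ 2 * |Real.cos (θ₀ - θ₁)| + Real.sin k ^ 2 * |Real.cos (θ₀ + θ₁)| := by
        rw [abs_mul, abs_mul, abs_sq, abs_sq]
    _ ≤ Real.cos k ^ 2 * 1 + Real.sin k ^ 2 * 1 := by
        gcongr <;> exact Real.abs_cos_le_one _
    _ = 1 := by rw [mul_one, mul_one, Real.cos_sq_add_sin_sq]

theorem Rmat_mul_Hcoin (k θ : ℝ) :
    Rmat k * Hcoin θ =
      !![exp (I * k) * Real.cos θ, exp (I * k) * Real.sin θ;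
        exp (-(I * k)) * Real.sin θ, -(exp (-(I * k)) * Real.cos θ)] := by
  simp [Rmat, Hcoin]

theorem det_Rmat_mul_Hcoin (k θ : ℝ) : (Rmat k * Hcoin θ).det = -1 := by
  have exp_mul_exp_neg : exp (I * k) * exp (-(I * k)) = 1 := by
    rw [← exp_add, add_neg_cancel, exp_zero]
  have sin_sq_add_cos_sq : (Real.sin θ : ℂ) ^ 2 + (Real.cos θ : ℂ) ^ 2 = 1 := by
    exact_mod_cast Real.sin_sq_add_cos_sq θ
  rw [Rmat_mul_Hcoin, Matrix.det_fin_two_of]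
  linear_combination -(exp (I * k) * exp (-(I * k))) * sin_sq_add_cos_sq - exp_mul_exp_neg

theorem two_mul_cos_eq_exp_I_mul (x : ℝ) :
    2 * (Real.cos x : ℂ) = exp (I * x) + exp (-(I * x)) := by
  rw [ofReal_cos, two_cos, neg_mul, mul_comm (x : ℂ) I]

theorem trace_Rmat_mul_Hcoin_mul_Rmat_mul_Hcoin (k l θ₀ θ₁ : ℝ) :
    ((Rmat k * Hcoin θ₁) * (Rmat l * Hcoin θ₀)).trace =
      2 * ((Real.cos θ₀ * Real.cos θ₁ * Real.cos (k + l) +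
        Real.sin θ₀ * Real.sin θ₁ * Real.cos (k - l) : ℝ) : ℂ) := by
  have cos_add_eq : 2 * (Real.cos (k + l) : ℂ) =
      exp (I * k) * exp (I * l) + exp (-(I * k)) * exp (-(I * l)) := by
    rw [two_mul_cos_eq_exp_I_mul, ← exp_add, ← exp_add]
    push_cast
    ring_nf
  have cos_sub_eq : 2 * (Real.cos (k - l) : ℂ) =
      exp (I * k) * exp (-(I * l)) + exp (-(I * k)) * exp (I * l) := by
    rw [two_mul_cos_eq_exp_I_mul, ← exp_add, ← exp_add]
    push_cast
    ring_nf
  rw [Rmat_mul_Hcoin, Rmat_mul_Hcoin, Matrix.mul_fin_two, Matrix.trace_fin_two_of, ofReal_add,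
    ofReal_mul, ofReal_mul, ofReal_mul, ofReal_mul]
  linear_combination -(Real.cos θ₀ * Real.cos θ₁ : ℂ) * cos_add_eq -
    (Real.sin θ₀ * Real.sin θ₁ : ℂ) * cos_sub_eq

theorem trace_two_period_QW (θ₀ θ₁ k : ℝ) :
    ((Rmat k * Hcoin θ₁) * (Rmat k * Hcoin θ₀)).trace = 2 * (eigP θ₀ θ₁ k : ℂ) := by
  rw [trace_Rmat_mul_Hcoin_mul_Rmat_mul_Hcoin, sub_self, Real.cos_zero, mul_one, ← two_mul, eigP]

theorem det_two_period_QW (θ₀ θ₁ k : ℝ) :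
    ((Rmat k * Hcoin θ₁) * (Rmat k * Hcoin θ₀)).det = 1 := by
  rw [Matrix.det_mul, det_Rmat_mul_Hcoin, det_Rmat_mul_Hcoin, neg_mul_neg, one_mul]

theorem two_period_QW_eigenvalues_general (θ₀ θ₁ k : ℝ) :
    |eigP θ₀ θ₁ k| ≤ 1 ∧
    spectrum ℂ ((Rmat k * Hcoin θ₁) * (Rmat k * Hcoin θ₀)) =
      {μ : ℂ | ∃ j : Fin 2,
        μ = (eigP θ₀ θ₁ k : ℂ) +
          (-1 : ℂ) ^ (j : ℕ) * Complex.I * (Real.sqrt (1 - eigP θ₀ θ₁ k ^ 2) : ℂ)} := by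
  have abs_le_one := abs_eigP_le_one θ₀ θ₁ k
  refine ⟨abs_le_one, ?_⟩
  rw [spectrum_eq_of_det_eq_one_of_trace_eq (det_two_period_QW θ₀ θ₁ k)
    (trace_two_period_QW θ₀ θ₁ k) abs_le_one]
  ext μ
  simp [Fin.exists_fin_two, sub_eq_add_neg]

/-- The eigenvalues of `Ĥ₁(k)Ĥ₀(k) = (R(k)H₁)(R(k)H₀)` are exactly
`λ_j(k) = p + (-1)^j i √(1 - p²)`, `j = 0, 1`; equivalently its characteristic
polynomial is `λ² - 2pλ + 1` and `|p| ≤ 1`. -/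
theorem two_period_QW_eigenvalues (θ₀ θ₁ k : ℝ) (hk : k ∈ Set.Ico 0 (2 * Real.pi)) :
    |eigP θ₀ θ₁ k| ≤ 1 ∧
    spectrum ℂ ((Rmat k * Hcoin θ₁) * (Rmat k * Hcoin θ₀)) =
      {μ : ℂ | ∃ j : Fin 2,
        μ = (eigP θ₀ θ₁ k : ℂ) +
          (-1 : ℂ) ^ (j : ℕ) * Complex.I * (Real.sqrt (1 - eigP θ₀ θ₁ k ^ 2) : ℂ)} :=
  two_period_QW_eigenvalues_general θ₀ θ₁ k
end
end

section
/- Let θ₀, θ₁ ∈ ℝ, set H_γ = [[cos θ_γ, sin θ_γ], [sin θ_γ, −cos θ_γ]] for γ = 0,1, R(k) = [[e^{ik}, 0],[0, e^{−ik}]], Ĥ_γ(k) = R(k) H_γ, and λ_j(k) = cos θ₀ cos θ₁ cos 2k + sin θ₀ sin θ₁ + (−1)^j · i · √(1 − (cos θ₀ cos θ₁ cos 2k + sin θ₀ sin θ₁)²) for j = 0,1. Then the vector v_j(k) = ᵀ( sin θ₀ cos θ₁ e^{2ik} − cos θ₀ sin θ₁ , i·(−cos θ₀ cos θ₁ sin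 2k + (−1)^j √(1 − (cos θ₀ cos θ₁ cos 2k + sin θ₀ sin θ₁)²)) ) satisfies the eigenvector equation Ĥ₁(k) Ĥ₀(k) v_j(k) = λ_j(k) v_j(k). -/
open MeasureTheory Complex Filter

noncomputable section

/-!
The matrix of two steps lies in `SU(2)`: each factor is unitary, and the determinants `1` of `R(k)`
and `-1` of the two coins multiply to `1`. A matrix `M` in `SU(2)` satisfies `M⋆ = adj M`, so
`M₁₁ = conj M₀₀` and the characteristic polynomial is `μ² - 2 Re(M₀₀) μ + 1`; since an entry of a
unitary matrix has modulus at most `1`, its roots are `p ± i √(1 - p²)` with `p = Re M₀₀`. For a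
root `μ`, the vector `(M₀₁, μ - M₀₀)` is annihilated by `M - μ`: the first row vanishes identically,
the second is minus the characteristic equation. Here `Re M₀₀ = eigP θ₀ θ₁ k`.
-/

section SpecialUnitary

open Matrix

theorem mulVec_eq_smul_of_isRoot_charpoly_fin_two {R : Type*} [CommRing R]
    (M : Matrix (Fin 2) (Fin 2) R) {μ : R} (hμ : M.charpoly.IsRoot μ) :
    M *ᵥ ![M 0 1, μ - M 0 0] = μ • ![M 0 1, μ - M 0 0] := by
  nontriviality R
  have hroot : μ ^ 2 - (M 0 0 + M 1 1) * μ + (M 0 0 * M 1 1 - M 0 1 * M 1 0) = 0 := by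
    simpa [charpoly_fin_two, trace_fin_two, det_fin_two] using hμ
  ext i
  fin_cases i
  · simp only [mulVec, dotProduct, Fin.sum_univ_two, Fin.zero_eta, cons_val_zero, cons_val_one,
      Pi.smul_apply, smul_eq_mul]
    ring
  · simp only [mulVec, dotProduct, Fin.sum_univ_two, Fin.mk_one, cons_val_zero, cons_val_one,
      Pi.smul_apply, smul_eq_mul]
    linear_combination -hroot

theorem star_eq_adjugate_of_mem_specialUnitaryGroup {n R : Type*} [Fintype n] [DecidableEq n]
    [CommRing R] [StarRing R] {M : Matrix n n R} (hM : M ∈ specialUnitaryGroup n R) :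
    star M = M.adjugate := by
  obtain ⟨hunitary, hdet⟩ := mem_specialUnitaryGroup_iff.mp hM
  refine left_inv_eq_right_inv (mem_unitaryGroup_iff'.mp hunitary) ?_
  rw [mul_adjugate, hdet, one_smul]

theorem sq_re_apply_le_one_of_mem_unitaryGroup {n 𝕜 : Type*} [Fintype n] [DecidableEq n]
    [RCLike 𝕜] {U : Matrix n n 𝕜} (hU : U ∈ unitaryGroup n 𝕜) (i j : n) :
    RCLike.re (U i j) ^ 2 ≤ 1 :=
  (sq_le_one_iff_abs_le_one _).mpr
    ((RCLike.abs_re_le_norm _).trans (entry_norm_bound_of_unitary hU i j))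

variable {M : Matrix (Fin 2) (Fin 2) ℂ}

theorem trace_of_mem_specialUnitaryGroup_fin_two (hM : M ∈ specialUnitaryGroup (Fin 2) ℂ) :
    M.trace = 2 * (M 0 0).re := by
  have hconj : star (M 0 0) = M 1 1 := by
    simpa [adjugate_fin_two] using
      congrFun₂ (star_eq_adjugate_of_mem_specialUnitaryGroup hM) 0 0
  rw [trace_fin_two, ← hconj, Complex.star_def, Complex.add_conj, ofReal_mul, ofReal_ofNat]

theorem isRoot_charpoly_of_mem_specialUnitaryGroup_fin_two
    (hM : M ∈ specialUnitaryGroup (Fin 2) ℂ) {ε : ℝ} (hε : ε ^ 2 = 1) :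
    M.charpoly.IsRoot ((M 0 0).re + ε * I * √(1 - (M 0 0).re ^ 2)) := by
  obtain ⟨hunitary, hdet⟩ := mem_specialUnitaryGroup_iff.mp hM
  have hsqrt : (√(1 - (M 0 0).re ^ 2) : ℂ) ^ 2 = 1 - ((M 0 0).re : ℂ) ^ 2 := by
    exact_mod_cast Real.sq_sqrt
      (sub_nonneg.mpr (sq_re_apply_le_one_of_mem_unitaryGroup hunitary 0 0))
  have hsign : (ε : ℂ) ^ 2 = 1 := by exact_mod_cast hε
  simp only [charpoly_fin_two, trace_of_mem_specialUnitaryGroup_fin_two hM, hdet,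
    Polynomial.IsRoot.def, Polynomial.eval_add, Polynomial.eval_sub, Polynomial.eval_mul,
    Polynomial.eval_pow, Polynomial.eval_X, Polynomial.eval_C]
  linear_combination (ε : ℂ) ^ 2 * (√(1 - (M 0 0).re ^ 2) : ℂ) ^ 2 * I_sq
    - (√(1 - (M 0 0).re ^ 2) : ℂ) ^ 2 * hsign - hsqrt

theorem mulVec_eq_smul_of_mem_specialUnitaryGroup_fin_two
    (hM : M ∈ specialUnitaryGroup (Fin 2) ℂ) {ε : ℝ} (hε : ε ^ 2 = 1) :
    M *ᵥ ![M 0 1, I * (-(M 0 0).im + ε * √(1 - (M 0 0).re ^ 2) : ℝ)] =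
      ((M 0 0).re + ε * I * √(1 - (M 0 0).re ^ 2) : ℂ) •
        ![M 0 1, I * (-(M 0 0).im + ε * √(1 - (M 0 0).re ^ 2) : ℝ)] := by
  have hsnd : I * (-(M 0 0).im + ε * √(1 - (M 0 0).re ^ 2) : ℝ) =
      (M 0 0).re + ε * I * √(1 - (M 0 0).re ^ 2) - M 0 0 := by
    push_cast
    linear_combination -re_add_im (M 0 0)
  rw [hsnd]
  exact mulVec_eq_smul_of_isRoot_charpoly_fin_two M
    (isRoot_charpoly_of_mem_specialUnitaryGroup_fin_two hM hε)

end SpecialUnitary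

section TwoPeriodWalk

open Matrix

theorem star_Rmat (k : ℝ) : star (Rmat k) = Rmat (-k) := by
  ext i j
  fin_cases i <;> fin_cases j <;> simp [Rmat, star_apply, ← Complex.exp_conj]

theorem Rmat_mul_Rmat_neg (k : ℝ) : Rmat k * Rmat (-k) = 1 := by
  simp [Rmat, one_fin_two, ← Complex.exp_add]

theorem Rmat_mem_specialUnitaryGroup (k : ℝ) : Rmat k ∈ specialUnitaryGroup (Fin 2) ℂ := by
  refine mem_specialUnitaryGroup_iff.mpr ⟨mem_unitaryGroup_iff.mpr ?_, ?_⟩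
  · rw [star_Rmat, Rmat_mul_Rmat_neg]
  · simp [Rmat, det_fin_two, ← Complex.exp_add]

theorem star_Hcoin (θ : ℝ) : star (Hcoin θ) = Hcoin θ := by
  ext i j
  fin_cases i <;> fin_cases j <;> simp [Hcoin, star_apply, -ofReal_cos, -ofReal_sin]

theorem Hcoin_mul_self (θ : ℝ) : Hcoin θ * Hcoin θ = 1 := by
  rw [Hcoin, mul_fin_two, one_fin_two]
  simp [← sq, mul_comm]

theorem Hcoin_mem_unitaryGroup (θ : ℝ) : Hcoin θ ∈ unitaryGroup (Fin 2) ℂ :=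
  mem_unitaryGroup_iff.mpr (by rw [star_Hcoin, Hcoin_mul_self])

theorem det_Hcoin (θ : ℝ) : (Hcoin θ).det = -1 := by
  rw [Hcoin, det_fin_two_of]
  push_cast
  linear_combination -Complex.sin_sq_add_cos_sq (θ : ℂ)

theorem Rmat_mul_Hcoin_mul_mem_specialUnitaryGroup (θ₀ θ₁ k : ℝ) :
    Rmat k * Hcoin θ₁ * (Rmat k * Hcoin θ₀) ∈ specialUnitaryGroup (Fin 2) ℂ := by
  obtain ⟨hR, hdetR⟩ := mem_specialUnitaryGroup_iff.mp (Rmat_mem_specialUnitaryGroup k)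
  refine mem_specialUnitaryGroup_iff.mpr ⟨?_, ?_⟩
  · exact mul_mem (mul_mem hR (Hcoin_mem_unitaryGroup θ₁)) (mul_mem hR (Hcoin_mem_unitaryGroup θ₀))
  · simp [hdetR, det_Hcoin]

theorem Rmat_mul_Hcoin_mul_row_zero (θ₀ θ₁ k : ℝ) :
    (Rmat k * Hcoin θ₁ * (Rmat k * Hcoin θ₀)) 0 =
      ![Real.cos θ₀ * Real.cos θ₁ * Complex.exp (2 * I * k) + Real.sin θ₀ * Real.sin θ₁,
        Real.sin θ₀ * Real.cos θ₁ * Complex.exp (2 * I * k) - Real.cos θ₀ * Real.sin θ₁] := by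
  have hsq : Complex.exp (2 * I * k) = Complex.exp (I * k) ^ 2 := by
    rw [← Complex.exp_nat_mul, Nat.cast_ofNat, mul_assoc]
  have hinv : Complex.exp (I * k) * Complex.exp (-(I * k)) = 1 := by
    rw [← Complex.exp_add, add_neg_cancel, Complex.exp_zero]
  simp only [Rmat, Hcoin, mul_fin_two, hsq]
  congrm ![?_, ?_]
  · linear_combination (Real.sin θ₀ * Real.sin θ₁ : ℂ) * hinv
  · linear_combination -(Real.cos θ₀ * Real.sin θ₁ : ℂ) * hinv

theorem Rmat_mul_Hcoin_mul_apply_zero_zero (θ₀ θ₁ k : ℝ) :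
    (Rmat k * Hcoin θ₁ * (Rmat k * Hcoin θ₀)) 0 0 =
      ⟨eigP θ₀ θ₁ k, Real.cos θ₀ * Real.cos θ₁ * Real.sin (2 * k)⟩ := by
  have hexp : Complex.exp (2 * I * k) = Real.cos (2 * k) + Real.sin (2 * k) * I := by
    rw [ofReal_cos, ofReal_sin, ← Complex.exp_mul_I]
    push_cast
    ring_nf
  rw [Rmat_mul_Hcoin_mul_row_zero, cons_val_zero, hexp, mk_eq_add_mul_I, eigP]
  push_cast
  ring

theorem Rmat_mul_Hcoin_mul_apply_zero_one (θ₀ θ₁ k : ℝ) :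
    (Rmat k * Hcoin θ₁ * (Rmat k * Hcoin θ₀)) 0 1 =
      Real.sin θ₀ * Real.cos θ₁ * Complex.exp (2 * I * k) - Real.cos θ₀ * Real.sin θ₁ := by
  rw [Rmat_mul_Hcoin_mul_row_zero, cons_val_one, cons_val_zero]

end TwoPeriodWalk

/-- The vector `v_j(k)` satisfies the eigenvector equation
`Ĥ₁(k)Ĥ₀(k) v_j(k) = λ_j(k) v_j(k)` for `j = 0, 1`. -/
theorem two_period_QW_eigenvectors (θ₀ θ₁ k : ℝ) (j : Fin 2) :
    ((Rmat k * Hcoin θ₁) * (Rmat k * Hcoin θ₀)).mulVec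
      ![(Real.sin θ₀ * Real.cos θ₁ : ℂ) * Complex.exp (2 * Complex.I * k) -
          (Real.cos θ₀ * Real.sin θ₁ : ℂ),
        Complex.I * ((-(Real.cos θ₀ * Real.cos θ₁ * Real.sin (2 * k)) +
          (-1 : ℝ) ^ (j : ℕ) * Real.sqrt (1 - eigP θ₀ θ₁ k ^ 2) : ℝ) : ℂ)] =
    ((eigP θ₀ θ₁ k : ℂ) +
        (-1 : ℂ) ^ (j : ℕ) * Complex.I * (Real.sqrt (1 - eigP θ₀ θ₁ k ^ 2) : ℂ)) •
      ![(Real.sin θ₀ * Real.cos θ₁ : ℂ) * Complex.exp (2 * Complex.I * k) -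
          (Real.cos θ₀ * Real.sin θ₁ : ℂ),
        Complex.I * ((-(Real.cos θ₀ * Real.cos θ₁ * Real.sin (2 * k)) +
          (-1 : ℝ) ^ (j : ℕ) * Real.sqrt (1 - eigP θ₀ θ₁ k ^ 2) : ℝ) : ℂ)] := by
  have hsign : ((-1 : ℝ) ^ (j : ℕ)) ^ 2 = 1 := by rw [pow_right_comm, neg_one_sq, one_pow]
  have heigen := mulVec_eq_smul_of_mem_specialUnitaryGroup_fin_two
    (Rmat_mul_Hcoin_mul_mem_specialUnitaryGroup θ₀ θ₁ k) hsign
  rw [Rmat_mul_Hcoin_mul_apply_zero_one, Rmat_mul_Hcoin_mul_apply_zero_zero] at heigen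
  simpa only [ofReal_pow, ofReal_neg, ofReal_one] using heigen
end
end
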